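/- arXiv:1205.1726 — 5 statements merged into one kernel-verified Lean document; each statement's English description precedes it below -/
import Mathlib

section
/- Let K be a Δ-field whose constant field K^Δ is algebraically closed, and let L|K be a finitely Δ-generated extension of Δ-fields with L^Δ = K^Δ. Then L|K is a Picard-Vessiot extension if and only if L|K is Δ-normal, i.e., for every commutative K-Δ-algebra R and every pair of K-Δ-morphisms τ_s, τ_t : L → R one has τ_t(L) ⊆ τ_s(L)R^Δ. -/
open scoped TensorProduct

/-- `S·T`: the set of finite sums `Σ sᵢ tᵢ` with `sᵢ ∈ S`, `tᵢ ∈ T`. -/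
def dotSet {R : Type*} [CommRing R] (S T : Set R) : Set R :=
  {x | ∃ (n : ℕ) (s t : Fin n → R), (∀ i, s i ∈ S) ∧ (∀ i, t i ∈ T) ∧ x = ∑ i, s i * t i}

/-- `ST`: the set of fractions `r/r'` with `r, r' ∈ S·T` and `r'` a unit of `R`. -/
def fracSet {R : Type*} [CommRing R] (S T : Set R) : Set R :=
  {x | ∃ r r', r ∈ dotSet S T ∧ r' ∈ dotSet S T ∧ IsUnit r' ∧ x * r' = r}

/-- The derivations `δ₁, …, δ_m` pairwise commute. -/
def CommutingDerivations {R : Type*} [CommRing R] {m : ℕ}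
    (δ : Fin m → Derivation ℤ R R) : Prop :=
  ∀ i j x, δ i (δ j x) = δ j (δ i x)

/-- The subfield of `Δ`-constants of a `Δ`-field. -/
def constantSubfield {K : Type*} [Field K] {m : ℕ}
    (δ : Fin m → Derivation ℤ K K) : Subfield K where
  carrier := {a | ∀ i, δ i a = 0}
  mul_mem' := by
    intro a b ha hb i
    simp [Derivation.leibniz, ha i, hb i]
  one_mem' := by intro i; simp
  add_mem' := by
    intro a b ha hb i
    simp [ha i, hb i]
  zero_mem' := by intro i; simp
  neg_mem' := by intro a ha i; simp [ha i]
  inv_mem' := by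
    intro a ha i
    rw [Derivation.leibniz_inv, ha i]
    simp

/-- `L|K` is a Picard-Vessiot extension: `L^Δ = K^Δ` and `L` is generated by a fundamental
solution matrix of an integrable linear system over `K`. -/
def IsPicardVessiot {m : ℕ} (K L : Type*) [Field K] [Field L] [Algebra K L]
    (δK : Fin m → Derivation ℤ K K) (δL : Fin m → Derivation ℤ L L) : Prop :=
  (∀ a : L, (∀ i, δL i a = 0) → a ∈ (algebraMap K L).range) ∧
  ∃ (n : ℕ) (A : Fin m → Matrix (Fin n) (Fin n) K) (Y : GL (Fin n) L),
    (∀ i j, (A j).map (fun x => δK i x) - (A i).map (fun x => δK j x)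
        = A i * A j - A j * A i) ∧
    (∀ i, ((Y : Matrix (Fin n) (Fin n) L)).map (fun x => δL i x)
        = (A i).map (algebraMap K L) * (Y : Matrix (Fin n) (Fin n) L)) ∧
    IntermediateField.adjoin K {x : L | ∃ p q, (Y : Matrix (Fin n) (Fin n) L) p q = x} = ⊤

/-- `L|K` is finitely `Δ`-generated: `L` is generated as a field over `K` by the elements
`θ(a)`, `a ∈ S`, `θ` a monomial in the derivations, for some finite `S ⊆ L`. -/
def FinitelyDeltaGenerated {m : ℕ} (K L : Type*) [Field K] [Field L] [Algebra K L]
    (δL : Fin m → Derivation ℤ L L) : Prop :=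
  ∃ S : Finset L, IntermediateField.adjoin K
    {x : L | ∃ a ∈ S, ∃ w : List (Fin m), x = w.foldr (fun i y => δL i y) a} = ⊤

universe u

/-- `L|K` is `Δ`-normal: for every commutative `K`-`Δ`-algebra `R` and every pair of
`K`-`Δ`-morphisms `τs, τt : L → R` one has `τt(L) ⊆ τs(L)R^Δ`. -/
def IsDeltaNormal {m : ℕ} (K L : Type*) [Field K] [Field L] [Algebra K L]
    (δK : Fin m → Derivation ℤ K K) (δL : Fin m → Derivation ℤ L L) : Prop :=
  ∀ (R : Type u) [CommRing R] [CharZero R] [Algebra K R]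
    (δR : Fin m → Derivation ℤ R R),
    CommutingDerivations δR →
    (∀ i a, δR i (algebraMap K R a) = algebraMap K R (δK i a)) →
    ∀ (τs τt : L →ₐ[K] R),
      (∀ i a, τs (δL i a) = δR i (τs a)) →
      (∀ i a, τt (δL i a) = δR i (τt a)) →
      ∀ b : L, τt b ∈ fracSet (Set.range ⇑τs) {a : R | ∀ i, δR i a = 0}

/-- The normality condition in the definition of strongly normal extensions: for every
`Δ`-field extension `M` of `K` and every pair of `K`-`Δ`-embeddings `τs, τt : L → M`
one has `τt(L) ⊆ τs(L)M^Δ` (field compositum inside `M`). -/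
def StronglyNormalCond {m : ℕ} (K L : Type*) [Field K] [Field L] [Algebra K L]
    (δK : Fin m → Derivation ℤ K K) (δL : Fin m → Derivation ℤ L L) : Prop :=
  ∀ (M : Type u) [Field M] [CharZero M] [Algebra K M]
    (δM : Fin m → Derivation ℤ M M),
    CommutingDerivations δM →
    (∀ i a, δM i (algebraMap K M a) = algebraMap K M (δK i a)) →
    ∀ (τs τt : L →ₐ[K] M),
      (∀ i a, τs (δL i a) = δM i (τs a)) →
      (∀ i a, τt (δL i a) = δM i (τt a)) →
      ∀ b : L, τt b ∈ fracSet (Set.range ⇑τs) {a : M | ∀ i, δM i a = 0}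

/-!
Let `L|K` be `Δ`-normal and compare the embeddings `a ↦ a ⊗ 1` and `b ↦ 1 ⊗ b` into
`R = L ⊗[K] L`. Contracting a constant of `R` with all functionals on the left factor produces a
finite-dimensional `Δ`-stable `K`-subspace of `L`, so normality places every element of `L` in
`K(V)` for some such `V`, and finite generation gives `L = K(V)`. A basis `b` of `V` solves a linear
system over `K`, and `1 ⊗ b` solves it in `R` with entries in the fractions of `L·R^Δ`. The common
denominators of these entries form a `Δ`-stable `L`-subspace of `L·R^Δ`, which is therefore spanned
by constants `e`; the coordinates of `(1 ⊗ b) e` in terms of `L`-independent constants are solutions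
in `L`. Hence a linear relation satisfied by all solutions in `L` also holds for `1 ⊗ b`, so it is
trivial, and `L` contains a fundamental matrix. It generates `L`, because it differs from any other
solution, such as `b`, by constant coefficients.

The same principle gives the converse: the fundamental matrices `τs(Y)` and `τt(Y)` differ by a
constant matrix.
-/

namespace PicardVessiot

section Connections

variable {ι K M N : Type*} [CommRing K] [AddCommGroup M] [Module K M] [AddCommGroup N] [Module K N]

/-- `(M, D)` is a differential module over `(K, d)`: `D` is additive and satisfies the Leibniz
rule over `d`. A `Δ`-module carries one such operator for each `δ i`. -/
def IsConnection (d : Derivation ℤ K K) (D : M →ₗ[ℤ] M) : Prop :=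
  ∀ (k : K) (x : M), D (k • x) = d k • x + k • D x

/-- `V` is a `Δ`-submodule for the operators `D i`. -/
def IsDeltaStable (D : ι → M →ₗ[ℤ] M) (V : Submodule K M) : Prop :=
  ∀ i, ∀ x ∈ V, D i x ∈ V

/-- The `Δ`-constants of a `Δ`-module. -/
def horizontal (D : ι → M →ₗ[ℤ] M) : Set M :=
  {x | ∀ i, D i x = 0}

/-- `y` solves the linear differential system `D i y = A i y` in the `Δ`-module `M`. -/
def IsSolution {n : Type*} [Fintype n] (A : ι → Matrix n n K) (D : ι → M →ₗ[ℤ] M)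
    (y : n → M) : Prop :=
  ∀ i j, D i (y j) = ∑ q, A i j q • y q

lemma isSolution_map_algebraMap {L n : Type*} [CommRing L] [Algebra K L] [Module L M]
    [IsScalarTower K L M] [Fintype n] {A : ι → Matrix n n K} {D : ι → M →ₗ[ℤ] M} {y : n → M} :
    IsSolution (fun i => (A i).map (algebraMap K L)) D y ↔ IsSolution A D y := by
  simp only [IsSolution, Matrix.map_apply, algebraMap_smul]

lemma isConnection_of_algebraMap {A : Type*} [CommRing A] [Algebra K A] {d : Derivation ℤ K K}
    {dA : Derivation ℤ A A} (h : ∀ k, dA (algebraMap K A k) = algebraMap K A (d k)) :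
    IsConnection d (dA : A →ₗ[ℤ] A) := by
  intro k x
  simp only [Derivation.coeFn_coe, Algebra.smul_def (A := A) k, Algebra.smul_def (A := A) (d k),
    Derivation.leibniz, h, smul_eq_mul]
  ring

lemma isDeltaStable_bot (D : ι → M →ₗ[ℤ] M) : IsDeltaStable D (⊥ : Submodule K M) := by
  rintro i _ rfl
  simp only [map_zero, zero_mem]

lemma IsDeltaStable.sup {D : ι → M →ₗ[ℤ] M} {V W : Submodule K M}
    (hV : IsDeltaStable D V) (hW : IsDeltaStable D W) : IsDeltaStable D (V ⊔ W) := by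
  intro i x hx
  obtain ⟨v, hv, w, hw, rfl⟩ := Submodule.mem_sup.1 hx
  rw [map_add]
  exact Submodule.add_mem_sup (hV i v hv) (hW i w hw)

lemma isDeltaStable_span_horizontal {δ : ι → Derivation ℤ K K} {D : ι → M →ₗ[ℤ] M}
    (hD : ∀ i, IsConnection (δ i) (D i)) :
    IsDeltaStable D (Submodule.span K (horizontal D)) := by
  intro i x hx
  induction hx using Submodule.span_induction with
  | mem x hx => simp only [hx i, zero_mem]
  | zero => simp only [map_zero, zero_mem]
  | add x y _ _ ihx ihy => simpa only [map_add] using add_mem ihx ihy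
  | smul k x hx ih =>
    rw [hD i]
    exact add_mem (Submodule.smul_mem _ _ hx) (Submodule.smul_mem _ _ ih)

lemma IsConnection.map_linearCombination {κ : Type*} {d : Derivation ℤ K K} {D : M →ₗ[ℤ] M}
    (hD : IsConnection d D) {v : κ → M} (hv : ∀ k, D (v k) = 0) (l : κ →₀ K) :
    D (Finsupp.linearCombination K v l) =
      Finsupp.linearCombination K v (l.mapRange d (map_zero d)) := by
  rw [Finsupp.linearCombination_apply, Finsupp.linearCombination_apply,
    Finsupp.sum_mapRange_index (h := fun k a => a • v k) fun _ => zero_smul K _, map_finsuppSum]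
  exact Finsupp.sum_congr fun k _ => by rw [hD, hv, smul_zero, add_zero]

/-- The coefficients expressing a constant modulo `I` in terms of constants that are independent
modulo `I` are themselves constants, as one sees by differentiating. -/
lemma exists_horizontal_sub_mem {δ : ι → Derivation ℤ K K} {D : ι → M →ₗ[ℤ] M}
    (hD : ∀ i, IsConnection (δ i) (D i)) {I : Submodule K M}
    (hI : IsDeltaStable D I) {κ : Type*} {v : κ → M} (hv : ∀ k, v k ∈ horizontal D)
    (hli : LinearIndependent K (I.mkQ ∘ v)) {x : M} (hx : x ∈ horizontal D)
    (hxv : I.mkQ x ∈ Submodule.span K (Set.range (I.mkQ ∘ v))) :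
    ∃ y ∈ Submodule.span K (Set.range v), x - y ∈ I ∧ x - y ∈ horizontal D := by
  obtain ⟨l, hl⟩ := (Finsupp.mem_span_range_iff_exists_finsupp).1 hxv
  have hmod (c : κ →₀ K) : I.mkQ (Finsupp.linearCombination K v c) =
      Finsupp.linearCombination K (I.mkQ ∘ v) c := Finsupp.apply_linearCombination ..
  have hxl : x - Finsupp.linearCombination K v l ∈ I := by
    rw [← I.ker_mkQ, LinearMap.mem_ker, map_sub, hmod, sub_eq_zero, ← hl]
    rfl
  have hconst (i : ι) : l.mapRange (δ i) (map_zero _) = 0 := by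
    have hDmem := hI i _ hxl
    rw [map_sub, hx i, zero_sub, neg_mem_iff,
      (hD i).map_linearCombination fun k => hv k i] at hDmem
    refine linearIndependent_iff.1 hli _ ?_
    rwa [← hmod, ← LinearMap.mem_ker, I.ker_mkQ]
  refine ⟨_, Finsupp.mem_span_range_iff_exists_finsupp.2 ⟨l, rfl⟩, hxl, fun i => ?_⟩
  have := (hD i).map_linearCombination (fun k => hv k i) l
  rw [hconst, map_zero] at this
  rw [map_sub, hx i, zero_sub, neg_eq_zero]
  exact this

end Connections

section Horizontal

variable {ι L M : Type*} [Field L] [AddCommGroup M] [Module L M]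
  {δ : ι → Derivation ℤ L L} {D : ι → M →ₗ[ℤ] M}

lemma IsDeltaStable.le_span_horizontal (hD : ∀ i, IsConnection (δ i) (D i)) {I : Submodule L M}
    (hI : IsDeltaStable D I) (hle : I ≤ Submodule.span L (horizontal D)) :
    I ≤ Submodule.span L (I ∩ horizontal D) := by
  obtain ⟨κ, a, -, hspan, hli⟩ :=
    exists_linearIndependent' L fun d : horizontal D => I.mkQ (d : M)
  let v : κ → M := fun k => a k
  set E := Submodule.span L (I ∩ horizontal D)
  have hEI : E ≤ I := Submodule.span_le.2 Set.inter_subset_left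
  have hdisj : I ⊓ Submodule.span L (Set.range v) = ⊥ := by
    rw [inf_comm, ← disjoint_iff]
    simpa only [Submodule.ker_mkQ] using
      (Submodule.range_ker_disjoint (f := I.mkQ) (v := v) hli)
  have hsup : I ≤ E ⊔ Submodule.span L (Set.range v) := by
    refine hle.trans (Submodule.span_le.2 fun x hx => ?_)
    obtain ⟨y, hy, hxI, hxD⟩ := exists_horizontal_sub_mem (v := v) hD hI (fun k => (a k).2) hli hx
      (hspan ▸ Submodule.subset_span ⟨⟨x, hx⟩, rfl⟩)
    rw [← sub_add_cancel x y]
    exact Submodule.add_mem_sup (Submodule.subset_span ⟨hxI, hxD⟩) hy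
  calc I = (E ⊔ Submodule.span L (Set.range v)) ⊓ I := (inf_eq_right.2 hsup).symm
    _ = E ⊔ Submodule.span L (Set.range v) ⊓ I := sup_inf_assoc_of_le _ hEI
    _ ≤ E := by rw [inf_comm, hdisj, sup_bot_eq]

lemma IsSolution.sum_smul_eq_zero (hD : ∀ i, IsConnection (δ i) (D i)) {n : Type*} [Fintype n]
    {A : ι → Matrix n n L} {y : n → M} (hy : IsSolution A D y)
    (hyspan : ∀ j, y j ∈ Submodule.span L (horizontal D)) {l : n → L}
    (hl : ∀ c, IsSolution A (fun i => (δ i : L →ₗ[ℤ] L)) c → ∑ j, l j * c j = 0) :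
    ∑ j, l j • y j = 0 := by
  obtain ⟨κ, a, -, hspan, hli⟩ := exists_linearIndependent' L ((↑) : horizontal D → M)
  let v : κ → M := fun k => a k
  replace hspan : Submodule.span L (Set.range v) = Submodule.span L (horizontal D) :=
    hspan.trans (by rw [Subtype.range_coe])
  simp_rw [← hspan, Finsupp.mem_span_range_iff_exists_finsupp] at hyspan
  choose c hc using hyspan
  change ∀ j, Finsupp.linearCombination L v (c j) = y j at hc
  have hcoord (i : ι) (j : n) :
      (c j).mapRange (δ i) (map_zero _) = ∑ q, A i j q • c q := by
    apply hli
    change Finsupp.linearCombination L v _ = Finsupp.linearCombination L v _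
    rw [← (hD i).map_linearCombination (v := v) fun k => (a k).2 i]
    simp only [map_sum, map_smul, hc, hy i j]
  have hsol (k : κ) : IsSolution A (fun i => (δ i : L →ₗ[ℤ] L)) fun j => c j k := by
    intro i j
    simpa [Finsupp.finsetSum_apply] using DFunLike.congr_fun (hcoord i j) k
  have hzero : ∑ j, l j • c j = 0 := by
    ext k
    simpa [Finsupp.finsetSum_apply] using hl _ (hsol k)
  simp only [← hc, ← map_smul, ← map_sum, hzero, map_zero]

end Horizontal

section Constants

variable {ι L R : Type*} [CommRing R]

/-- The ring of constants `R^Δ` of a `Δ`-ring. -/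
def constantSubring (δ : ι → Derivation ℤ R R) : Subring R where
  carrier := {a | ∀ i, δ i a = 0}
  mul_mem' ha hb i := by simp [Derivation.leibniz, ha i, hb i]
  one_mem' i := by simp
  add_mem' ha hb i := by simp [ha i, hb i]
  zero_mem' i := by simp
  neg_mem' ha i := by simp [ha i]

/-- The subalgebra `L·R^Δ` of an `L`-algebra `R`. -/
def constantSpan (L : Type*) [CommRing L] [Algebra L R] (δ : ι → Derivation ℤ R R) :
    Subalgebra L R :=
  Algebra.adjoin L (constantSubring δ)

variable [CommRing L] [Algebra L R] {δ : ι → Derivation ℤ R R}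

lemma toSubmodule_constantSpan :
    (constantSpan L δ).toSubmodule =
      Submodule.span L (horizontal fun i => (δ i : R →ₗ[ℤ] R)) := by
  rw [constantSpan, Algebra.adjoin_eq_span, ← Subring.coe_toSubmonoid, Submonoid.closure_eq]
  rfl

lemma mem_constantSpan {x : R} :
    x ∈ constantSpan L δ ↔ x ∈ Submodule.span L (horizontal fun i => (δ i : R →ₗ[ℤ] R)) := by
  rw [← toSubmodule_constantSpan, Subalgebra.mem_toSubmodule]

lemma mem_dotSet_range_algebraMap (T : Set R) {x : R} :
    x ∈ dotSet (Set.range (algebraMap L R)) T ↔ x ∈ Submodule.span L T := by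
  rw [Submodule.mem_span_set']
  constructor
  · rintro ⟨n, s, t, hs, ht, rfl⟩
    choose f hf using hs
    exact ⟨n, f, fun i => ⟨t i, ht i⟩, by simp only [Algebra.smul_def, hf]⟩
  · rintro ⟨n, f, t, rfl⟩
    exact ⟨n, fun i => algebraMap L R (f i), fun i => t i, fun i => ⟨f i, rfl⟩, fun i => (t i).2,
      by simp only [Algebra.smul_def]⟩

lemma mem_fracSet_iff_exists_isUnit {x : R} :
    x ∈ fracSet (Set.range (algebraMap L R)) {a | ∀ i, δ i a = 0} ↔
      ∃ u ∈ constantSpan L δ, IsUnit u ∧ x * u ∈ constantSpan L δ := by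
  simp only [mem_constantSpan, fracSet, Set.mem_ofPred_eq, mem_dotSet_range_algebraMap]
  exact ⟨fun ⟨_, u, hr, hu, hunit, h⟩ => ⟨u, hu, hunit, h ▸ hr⟩,
    fun ⟨u, hu, hunit, h⟩ => ⟨_, u, h, hu, hunit, rfl⟩⟩

lemma exists_common_denominator {n : Type*} [Finite n] (N : Subalgebra L R)
    {y : n → R} (hy : ∀ j, ∃ u ∈ N, IsUnit u ∧ y j * u ∈ N) :
    ∃ u ∈ N, IsUnit u ∧ ∀ j, y j * u ∈ N := by
  classical
  cases nonempty_fintype n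
  choose u hu hunit hyu using hy
  refine ⟨∏ j, u j, prod_mem fun j _ => hu j,
    IsUnit.prod_univ_iff.2 hunit, fun j => ?_⟩
  rw [← Finset.mul_prod_erase _ _ (Finset.mem_univ j), ← mul_assoc]
  exact mul_mem (hyu j) (prod_mem fun q _ => hu q)

end Constants

section Denominators

variable {ι L R n : Type*} [CommRing L] [CommRing R] [Algebra L R]
  {δL : ι → Derivation ℤ L L} {δ : ι → Derivation ℤ R R} {y : n → R}

/-- The elements of `L·R^Δ` that clear the denominators of all `y j`. -/
def denominators (δ : ι → Derivation ℤ R R) (y : n → R) : Submodule L R :=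
  (constantSpan L δ).toSubmodule ⊓
    ⨅ j, (constantSpan L δ).toSubmodule.comap (LinearMap.mulLeft L (y j))

lemma mem_denominators {x : R} :
    x ∈ denominators (L := L) δ y ↔
      x ∈ constantSpan L δ ∧ ∀ j, y j * x ∈ constantSpan L δ := by
  simp [denominators]

variable [Fintype n] {A : ι → Matrix n n L}

lemma isDeltaStable_denominators (h : ∀ i a, δ i (algebraMap L R a) = algebraMap L R (δL i a))
    (hy : IsSolution A (fun i => (δ i : R →ₗ[ℤ] R)) y) :
    IsDeltaStable (fun i => (δ i : R →ₗ[ℤ] R)) (denominators (L := L) δ y) := by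
  have hstab : ∀ i, ∀ x ∈ constantSpan L δ, δ i x ∈ constantSpan L δ := by
    simp only [mem_constantSpan]
    exact isDeltaStable_span_horizontal fun i => isConnection_of_algebraMap (h i)
  intro i x hx
  rw [mem_denominators] at hx ⊢
  refine ⟨hstab i x hx.1, fun j => ?_⟩
  have hleib : y j * δ i x = δ i (y j * x) - ∑ q, A i j q • (y q * x) := by
    have hyj : δ i (y j) = ∑ q, A i j q • y q := hy i j
    simp only [Derivation.leibniz, hyj, smul_eq_mul, Finset.sum_mul, smul_mul_assoc, mul_comm x,
      add_sub_cancel_right]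
  rw [Derivation.coeFn_coe, hleib]
  exact sub_mem (hstab i _ (hx.2 j)) (sum_mem fun q _ => Subalgebra.smul_mem _ (hx.2 q) _)

/-- The denominators `e ∈ R^Δ` generate the unit ideal, and for each of them `y * e` is a solution
with entries in `L·R^Δ`. -/
lemma IsSolution.sum_smul_eq_zero_of_isUnit {L : Type*} [Field L] [Algebra L R]
    {δL : ι → Derivation ℤ L L} {A : ι → Matrix n n L}
    (h : ∀ i a, δ i (algebraMap L R a) = algebraMap L R (δL i a))
    (hy : IsSolution A (fun i => (δ i : R →ₗ[ℤ] R)) y) {u : R}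
    (hu : u ∈ denominators (L := L) δ y) (hunit : IsUnit u) {l : n → L}
    (hl : ∀ c, IsSolution A (fun i => (δL i : L →ₗ[ℤ] L)) c → ∑ j, l j * c j = 0) :
    ∑ j, l j • y j = 0 := by
  have hconn (i : ι) : IsConnection (δL i) (δ i : R →ₗ[ℤ] R) := isConnection_of_algebraMap (h i)
  have hann : denominators (L := L) δ y ≤
      LinearMap.ker (LinearMap.mulLeft L (∑ j, l j • y j)) := by
    refine ((isDeltaStable_denominators h hy).le_span_horizontal hconn
      (inf_le_left.trans toSubmodule_constantSpan.le)).trans (Submodule.span_le.2 ?_)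
    rintro e ⟨he, hconst⟩
    have hye : IsSolution A (fun i => (δ i : R →ₗ[ℤ] R)) fun j => y j * e := by
      intro i j
      have hyj : δ i (y j) = ∑ q, A i j q • y q := hy i j
      have hei : δ i e = 0 := hconst i
      simp only [Derivation.coeFn_coe, Derivation.leibniz, hyj, hei, smul_eq_mul, mul_zero,
        zero_add, Finset.sum_mul, smul_mul_assoc, mul_comm e]
    have := hye.sum_smul_eq_zero hconn
      (fun j => mem_constantSpan.1 ((mem_denominators.1 he).2 j)) hl
    simpa only [SetLike.mem_coe, LinearMap.mem_ker, LinearMap.mulLeft_apply, Finset.sum_mul,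
      smul_mul_assoc] using this
  exact hunit.mul_left_eq_zero.1 (hann hu)

end Denominators

section Tensor

variable {K M N : Type*} [CommRing K] [AddCommGroup M] [Module K M] [AddCommGroup N] [Module K N]
  {d : Derivation ℤ K K} {D : M →ₗ[ℤ] M} {D' : N →ₗ[ℤ] N}

/-- The tensor product `D ⊗ 1 + 1 ⊗ D'` of two differential modules over `(K, d)`. Neither summand
is well defined on its own, since `D` and `D'` are not `K`-linear. -/
noncomputable def tensorConnection (hD : IsConnection d D) (hD' : IsConnection d D') :
    M ⊗[K] N →ₗ[ℤ] M ⊗[K] N :=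
  AddMonoidHom.toIntLinearMap <| TensorProduct.liftAddHom
    (AddMonoidHom.mk' (fun x => AddMonoidHom.mk' (fun y => D x ⊗ₜ y + x ⊗ₜ D' y) fun y z => by
        simp only [TensorProduct.tmul_add, map_add]; abel) fun x z => by
        ext y; simp only [TensorProduct.add_tmul, map_add, AddMonoidHom.mk'_apply,
          AddMonoidHom.add_apply]; abel)
    fun k x y => by
      simp only [AddMonoidHom.mk'_apply, hD k x, hD' k y, TensorProduct.add_tmul,
        TensorProduct.tmul_add, TensorProduct.smul_tmul]
      abel

@[simp]
lemma tensorConnection_tmul (hD : IsConnection d D) (hD' : IsConnection d D') (x : M) (y : N) :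
    tensorConnection hD hD' (x ⊗ₜ y) = D x ⊗ₜ y + x ⊗ₜ D' y :=
  rfl

/-- The dual of a differential module, `φ ↦ d ∘ φ - φ ∘ D`. -/
def dualConnection (hD : IsConnection d D) (φ : Module.Dual K M) : Module.Dual K M where
  toFun x := d (φ x) - φ (D x)
  map_add' x y := by simp only [map_add]; abel
  map_smul' k x := by
    simp only [hD k x, map_smul, map_add, smul_eq_mul, Derivation.leibniz, RingHom.id_apply]
    ring

/-- Contraction of the first factor: `slice (x ⊗ₜ y) φ = φ x • y`. -/
noncomputable def slice : M ⊗[K] N →ₗ[K] Module.Dual K M →ₗ[K] N :=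
  dualTensorHom K (Module.Dual K M) N ∘ₗ (Module.Dual.eval K M).rTensor N

@[simp]
lemma slice_tmul (x : M) (y : N) (φ : Module.Dual K M) : slice (x ⊗ₜ y) φ = φ x • y :=
  rfl

lemma exists_slice_ne_zero [Module.Free K M] {x : M ⊗[K] N} (hx : x ≠ 0) :
    ∃ φ, slice x φ ≠ 0 := by
  classical
  let B := Module.Free.chooseBasis K M
  have hcoord (z : M ⊗[K] N) (j) :
      TensorProduct.equivFinsuppOfBasisLeft B z j = slice z (B.coord j) := by
    induction z with
    | zero => simp
    | tmul x y => simp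
    | add z w hz hw => simp only [map_add, Finsupp.add_apply, LinearMap.add_apply, hz, hw]
  by_contra! h
  refine hx ((TensorProduct.equivFinsuppOfBasisLeft B).map_eq_zero_iff.1 ?_)
  ext j
  rw [hcoord, h, Finsupp.zero_apply]

lemma finite_range_slice [IsNoetherianRing K] (x : M ⊗[K] N) :
    Module.Finite K (LinearMap.range (slice x)) := by
  rw [Module.Finite.iff_fg]
  induction x with
  | zero => simpa using Submodule.fg_bot
  | tmul x y =>
    refine (Submodule.fg_span_singleton y).of_le ?_
    rintro _ ⟨φ, rfl⟩
    exact Submodule.smul_mem _ _ (Submodule.mem_span_singleton_self y)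
  | add x y hx hy =>
    rw [map_add]
    exact (hx.sup hy).of_le (LinearMap.range_add_le _ _)

lemma connection_slice (hD : IsConnection d D) (hD' : IsConnection d D') (x : M ⊗[K] N)
    (φ : Module.Dual K M) :
    D' (slice x φ) = slice (tensorConnection hD hD' x) φ + slice x (dualConnection hD φ) := by
  induction x with
  | zero => simp
  | tmul x y =>
    rw [slice_tmul, hD']
    simp only [slice_tmul, tensorConnection_tmul, map_add, LinearMap.add_apply,
      dualConnection, LinearMap.coe_mk, AddHom.coe_mk, sub_smul]
    abel
  | add x y hx hy =>
    simp only [map_add, LinearMap.add_apply, hx, hy]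
    abel

lemma isDeltaStable_range_slice {ι : Type*} {δ : ι → Derivation ℤ K K} {D : ι → M →ₗ[ℤ] M}
    {D' : ι → N →ₗ[ℤ] N} (hD : ∀ i, IsConnection (δ i) (D i))
    (hD' : ∀ i, IsConnection (δ i) (D' i)) {x : M ⊗[K] N}
    (hx : x ∈ horizontal fun i => tensorConnection (hD i) (hD' i)) :
    IsDeltaStable D' (LinearMap.range (slice x)) := by
  rintro i _ ⟨φ, rfl⟩
  rw [connection_slice (hD i) (hD' i), hx i, map_zero, LinearMap.zero_apply, zero_add]
  exact LinearMap.mem_range_self _ _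

end Tensor

section TensorAlgebra

variable {K A B : Type*} [CommRing K] [CommRing A] [Algebra K A] [CommRing B] [Algebra K B]
  {d : Derivation ℤ K K} {dA : Derivation ℤ A A} {dB : Derivation ℤ B B}

/-- Derivations of a commutative ring over `ℤ`. Applying this to `A ⊗[K] B` selects the instances
that come from its commutative ring structure, as in the statements about abstract `Δ`-rings,
rather than the ones specific to tensor products. -/
abbrev IntDerivation (R : Type*) [CommRing R] : Type _ :=
  Derivation ℤ R R

/-- The derivation of `R` given by an additive map that satisfies the Leibniz rule. -/
def IntDerivation.mk {R : Type*} [CommRing R] (F : R →ₗ[ℤ] R)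
    (hF : ∀ x y, F (x * y) = x * F y + y * F x) : IntDerivation R :=
  Derivation.mk' F hF

/-- The derivation `a ⊗ b ↦ dA a ⊗ b + a ⊗ dB b` of `A ⊗[K] B`. -/
noncomputable def tensorDerivation (hA : ∀ k, dA (algebraMap K A k) = algebraMap K A (d k))
    (hB : ∀ k, dB (algebraMap K B k) = algebraMap K B (d k)) : IntDerivation (A ⊗[K] B) :=
  .mk (tensorConnection (isConnection_of_algebraMap hA) (isConnection_of_algebraMap hB))
    fun x y => by
      induction x with
      | zero => simp
      | add x x' hx hx' => simp only [add_mul, map_add, hx, hx', mul_add]; ring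
      | tmul a b =>
        induction y with
        | zero => simp
        | add y y' hy hy' => simp only [mul_add, map_add, hy, hy', add_mul]; ring
        | tmul a' b' =>
          simp only [Algebra.TensorProduct.tmul_mul_tmul, tensorConnection_tmul,
            Derivation.coeFn_coe, Derivation.leibniz, smul_eq_mul, TensorProduct.add_tmul,
            TensorProduct.tmul_add, mul_add, mul_comm a', mul_comm b']
          abel

variable (hA : ∀ k, dA (algebraMap K A k) = algebraMap K A (d k))
  (hB : ∀ k, dB (algebraMap K B k) = algebraMap K B (d k))

@[simp]
lemma tensorDerivation_tmul (a : A) (b : B) :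
    tensorDerivation hA hB (a ⊗ₜ b) = dA a ⊗ₜ b + a ⊗ₜ dB b :=
  rfl

lemma tensorDerivation_one_tmul (b : B) : tensorDerivation hA hB (1 ⊗ₜ b) = 1 ⊗ₜ dB b := by
  simp

lemma tensorDerivation_algebraMap_left (a : A) :
    tensorDerivation hA hB (algebraMap A (A ⊗[K] B) a) = algebraMap A (A ⊗[K] B) (dA a) := by
  simp [Algebra.TensorProduct.algebraMap_apply]

lemma tensorDerivation_algebraMap (k : K) :
    tensorDerivation hA hB (algebraMap K (A ⊗[K] B) k) = algebraMap K (A ⊗[K] B) (d k) := by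
  rw [IsScalarTower.algebraMap_apply K A, tensorDerivation_algebraMap_left, hA,
    ← IsScalarTower.algebraMap_apply]

lemma commutingDerivations_tensorDerivation {m : ℕ} {δK : Fin m → Derivation ℤ K K}
    {δA : Fin m → Derivation ℤ A A} {δB : Fin m → Derivation ℤ B B}
    (hA : ∀ i k, δA i (algebraMap K A k) = algebraMap K A (δK i k))
    (hB : ∀ i k, δB i (algebraMap K B k) = algebraMap K B (δK i k))
    (hcA : CommutingDerivations δA) (hcB : CommutingDerivations δB) :
    CommutingDerivations fun i => tensorDerivation (hA i) (hB i) := by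
  intro i j x
  induction x with
  | zero => simp only [map_zero]
  | add x y hx hy => simp only [map_add, hx, hy]
  | tmul a b =>
    simp only [tensorDerivation_tmul, map_add, hcA i j, hcB i j]
    abel

lemma slice_smul_left (a : A) (x : A ⊗[K] B) (φ : Module.Dual K A) :
    slice (a • x) φ = slice x (φ ∘ₗ LinearMap.mulLeft K a) := by
  induction x with
  | zero => simp
  | tmul b c => rfl
  | add x y hx hy => simp only [smul_add, map_add, LinearMap.add_apply, hx, hy]

lemma slice_one_tmul_mul (b : B) (x : A ⊗[K] B) (φ : Module.Dual K A) :
    slice ((1 ⊗ₜ b) * x) φ = b * slice x φ := by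
  induction x with
  | zero => simp
  | tmul a c => simp
  | add x y hx hy => simp only [mul_add, map_add, LinearMap.add_apply, hx, hy]

lemma exists_isDeltaStable_of_mem_constantSpan [IsNoetherianRing K] {ι : Type*}
    {δK : ι → Derivation ℤ K K} {δA : ι → Derivation ℤ A A} {δB : ι → Derivation ℤ B B}
    {hA : ∀ i k, δA i (algebraMap K A k) = algebraMap K A (δK i k)}
    {hB : ∀ i k, δB i (algebraMap K B k) = algebraMap K B (δK i k)} {x : A ⊗[K] B}
    (hx : x ∈ constantSpan A fun i => tensorDerivation (hA i) (hB i)) :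
    ∃ V : Submodule K B, Module.Finite K V ∧ IsDeltaStable (fun i => (δB i : B →ₗ[ℤ] B)) V ∧
      ∀ φ, slice x φ ∈ V := by
  rw [mem_constantSpan] at hx
  induction hx using Submodule.span_induction with
  | mem x hx =>
    exact ⟨_, finite_range_slice x, isDeltaStable_range_slice
      (fun i => isConnection_of_algebraMap (hA i)) (fun i => isConnection_of_algebraMap (hB i)) hx,
      LinearMap.mem_range_self _⟩
  | zero => exact ⟨⊥, inferInstance, isDeltaStable_bot _, by simp⟩
  | add x y _ _ hx hy =>
    obtain ⟨V, _, hV, hxV⟩ := hx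
    obtain ⟨W, _, hW, hyW⟩ := hy
    refine ⟨V ⊔ W, inferInstance, hV.sup hW, fun φ => ?_⟩
    rw [map_add]
    exact Submodule.add_mem_sup (hxV φ) (hyW φ)
  | smul a x _ hx =>
    obtain ⟨V, hfin, hV, hxV⟩ := hx
    exact ⟨V, hfin, hV, fun φ => slice_smul_left a x φ ▸ hxV _⟩

end TensorAlgebra

section FundamentalMatrices

lemma exists_generalLinear_of_span_eq_top {L n : Type*} [Field L] [Fintype n] [DecidableEq n]
    {s : Set (n → L)} (hs : Submodule.span L s = ⊤) :
    ∃ Y : GL n L, ∀ q, Y.1.col q ∈ s := by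
  let B₀ := Module.Basis.ofSpan hs.ge
  let B := B₀.reindex (B₀.indexEquiv (Pi.basisFun L n))
  let Y : Matrix n n L := Matrix.of fun p q => B q p
  have hY : IsUnit Y := Matrix.linearIndependent_cols_iff_isUnit.1 B.linearIndependent
  refine ⟨hY.unit, fun q => Module.Basis.ofSpan_subset hs.ge ?_⟩
  rw [← B₀.range_reindex (B₀.indexEquiv (Pi.basisFun L n))]
  exact ⟨q, rfl⟩

variable {R n p q : Type*} [CommRing R] [Fintype n]

lemma map_derivation_mul (d : Derivation ℤ R R) (M : Matrix p n R) (N : Matrix n q R) :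
    (M * N).map d = M.map d * N + M * N.map d := by
  ext a b
  simp only [Matrix.map_apply, Matrix.mul_apply, Matrix.add_apply, map_sum, Derivation.leibniz,
    smul_eq_mul, ← Finset.sum_add_distrib]
  exact Finset.sum_congr rfl fun j _ => by ring

lemma map_derivation_eq_mul_iff {ι : Type*} {δ : ι → Derivation ℤ R R} {A : ι → Matrix n n R}
    {W : Matrix n q R} :
    (∀ i, W.map (δ i) = A i * W) ↔ ∀ k, IsSolution A (fun i => (δ i : R →ₗ[ℤ] R)) (W.col k) := by
  simp only [← Matrix.ext_iff]
  exact ⟨fun h k i j => h i j k, fun h i j k => h k i j⟩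

variable [DecidableEq n]

lemma map_derivation_inv_mul_eq_zero {d : Derivation ℤ R R} {A : Matrix n n R} {Z : GL n R}
    {W : Matrix n q R} (hZ : Z.1.map d = A * Z.1) (hW : W.map d = A * W) :
    (Z⁻¹.1 * W).map d = 0 := by
  have hinv : Z⁻¹.1 * Z.1 = 1 := Z.inv_mul
  have hZW : Z.1 * (Z⁻¹.1 * W) = W := by rw [← Matrix.mul_assoc, Z.mul_inv, Matrix.one_mul]
  have hleib := map_derivation_mul d Z.1 (Z⁻¹.1 * W)
  rw [hZW, hW, hZ, Matrix.mul_assoc, hZW, left_eq_add] at hleib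
  rw [← Matrix.one_mul ((Z⁻¹.1 * W).map d), ← hinv, Matrix.mul_assoc, hleib, Matrix.mul_zero]

lemma map_sub_map_eq_of_commute {d₁ d₂ : Derivation ℤ R R} (hcomm : ∀ x, d₁ (d₂ x) = d₂ (d₁ x))
    {A₁ A₂ : Matrix n n R} {Y : GL n R} (h₁ : Y.1.map d₁ = A₁ * Y.1) (h₂ : Y.1.map d₂ = A₂ * Y.1) :
    A₂.map d₁ - A₁.map d₂ = A₁ * A₂ - A₂ * A₁ := by
  have htwice : (Y.1.map d₂).map d₁ = (Y.1.map d₁).map d₂ := by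
    ext p q
    exact hcomm _
  rw [h₁, h₂, map_derivation_mul, map_derivation_mul, h₁, h₂, ← Matrix.mul_assoc,
    ← Matrix.mul_assoc, ← Matrix.add_mul, ← Matrix.add_mul] at htwice
  rw [sub_eq_sub_iff_add_eq_add, add_comm (A₁ * A₂)]
  exact Y.isUnit.mul_left_injective htwice

end FundamentalMatrices

section Extension

variable {ι K L : Type*} [Field K] [Field L] [Algebra K L]

lemma derivation_mem_adjoin {d : Derivation ℤ K K} {d' : Derivation ℤ L L}
    (hd : ∀ k, d' (algebraMap K L k) = algebraMap K L (d k)) {s : Set L}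
    (hs : ∀ x ∈ s, d' x ∈ IntermediateField.adjoin K s) {x : L}
    (hx : x ∈ IntermediateField.adjoin K s) : d' x ∈ IntermediateField.adjoin K s := by
  induction hx using IntermediateField.adjoin_induction with
  | mem x hx => exact hs x hx
  | algebraMap k => exact hd k ▸ IntermediateField.algebraMap_mem _ _
  | add x y _ _ hx hy => exact map_add d' x y ▸ add_mem hx hy
  | inv x hx hdx =>
    rw [Derivation.leibniz_inv]
    exact mul_mem (neg_mem (pow_mem (inv_mem hx) _)) hdx
  | mul x y hx hy hdx hdy =>
    rw [Derivation.leibniz]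
    exact add_mem (mul_mem hx hdy) (mul_mem hy hdx)

lemma mem_of_slice_mem {A : Type*} [CommRing A] [Algebra K A] {F : IntermediateField K L}
    {u : A ⊗[K] L} (hu : u ≠ 0) (hF : ∀ φ, slice u φ ∈ F) {b : L}
    (hbF : ∀ φ, slice ((1 ⊗ₜ b) * u) φ ∈ F) : b ∈ F := by
  obtain ⟨φ, hφ⟩ := exists_slice_ne_zero hu
  have := div_mem (hbF φ) (hF φ)
  rwa [slice_one_tmul_mul, mul_div_cancel_right₀ _ hφ] at this

lemma IsDeltaStable.exists_isSolution {R M : Type*} [CommRing R] [AddCommGroup M] [Module R M]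
    {D : ι → M →ₗ[ℤ] M} {V : Submodule R M} (hV : IsDeltaStable D V) {n : Type*} [Fintype n]
    (b : Module.Basis n R V) : ∃ A : ι → Matrix n n R, IsSolution A D fun j => (b j : M) := by
  refine ⟨fun i => Matrix.of fun j => b.repr ⟨D i (b j), hV i _ (b j).2⟩, fun i j => ?_⟩
  have := congrArg Subtype.val (b.sum_repr ⟨D i (b j), hV i _ (b j).2⟩)
  rw [Submodule.coe_sum] at this
  exact this.symm

end Extension

section DeltaNormal

variable {m : ℕ} {K : Type*} {L : Type u} [Field K] [Field L] [Algebra K L]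
  {δK : Fin m → Derivation ℤ K K} {δL : Fin m → Derivation ℤ L L}

lemma exists_isUnit_of_isDeltaNormal [CharZero K] (hcL : CommutingDerivations δL)
    (hδ : ∀ i a, δL i (algebraMap K L a) = algebraMap K L (δK i a))
    (hnormal : IsDeltaNormal.{u} K L δK δL) (b : L) :
    ∃ u ∈ constantSpan L fun i => tensorDerivation (hδ i) (hδ i),
      IsUnit u ∧ (1 ⊗ₜ b) * u ∈ constantSpan L fun i => tensorDerivation (hδ i) (hδ i) := by
  have : CharZero (L ⊗[K] L) :=
    charZero_of_injective_algebraMap (algebraMap K (L ⊗[K] L)).injective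
  exact mem_fracSet_iff_exists_isUnit.1 <| hnormal (L ⊗[K] L) _
    (commutingDerivations_tensorDerivation hδ hδ hcL hcL)
    (fun i => tensorDerivation_algebraMap (hδ i) (hδ i))
    Algebra.TensorProduct.includeLeft Algebra.TensorProduct.includeRight
    (fun i a => (tensorDerivation_algebraMap_left (hδ i) (hδ i) a).symm)
    (fun i a => (tensorDerivation_one_tmul (hδ i) (hδ i) a).symm) b

lemma exists_isDeltaStable_mem_adjoin
    {hδ : ∀ i a, δL i (algebraMap K L a) = algebraMap K L (δK i a)} {b : L} {u : L ⊗[K] L}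
    (hu : u ∈ constantSpan L fun i => tensorDerivation (hδ i) (hδ i)) (hunit : IsUnit u)
    (hbu : (1 ⊗ₜ b) * u ∈ constantSpan L fun i => tensorDerivation (hδ i) (hδ i)) :
    ∃ V : Submodule K L, Module.Finite K V ∧ IsDeltaStable (fun i => (δL i : L →ₗ[ℤ] L)) V ∧
      b ∈ IntermediateField.adjoin K (V : Set L) := by
  obtain ⟨V, _, hV, huV⟩ := exists_isDeltaStable_of_mem_constantSpan hu
  obtain ⟨W, _, hW, hbW⟩ := exists_isDeltaStable_of_mem_constantSpan hbu
  refine ⟨V ⊔ W, inferInstance, hV.sup hW, mem_of_slice_mem hunit.ne_zero (fun φ => ?_) fun φ => ?_⟩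
  · exact IntermediateField.subset_adjoin K _ (Submodule.mem_sup_left (huV φ))
  · exact IntermediateField.subset_adjoin K _ (Submodule.mem_sup_right (hbW φ))

lemma exists_isDeltaStable_forall_mem_adjoin {ι : Type*} {δ : ι → Derivation ℤ L L} {S : Finset L}
    (hS : ∀ b ∈ S, ∃ V : Submodule K L, Module.Finite K V ∧
      IsDeltaStable (fun i => (δ i : L →ₗ[ℤ] L)) V ∧ b ∈ IntermediateField.adjoin K (V : Set L)) :
    ∃ V : Submodule K L, Module.Finite K V ∧ IsDeltaStable (fun i => (δ i : L →ₗ[ℤ] L)) V ∧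
      ∀ b ∈ S, b ∈ IntermediateField.adjoin K (V : Set L) := by
  classical
  induction S using Finset.induction_on with
  | empty => exact ⟨⊥, inferInstance, isDeltaStable_bot _, by simp⟩
  | insert b S _ ih =>
    obtain ⟨V, _, hV, hbV⟩ := hS b (Finset.mem_insert_self b S)
    obtain ⟨W, _, hW, hSW⟩ := ih fun c hc => hS c (Finset.mem_insert_of_mem hc)
    refine ⟨V ⊔ W, inferInstance, hV.sup hW, ?_⟩
    rw [Finset.forall_mem_insert]
    exact ⟨IntermediateField.adjoin.mono K _ _ (le_sup_left (a := V)) hbV,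
      fun c hc => IntermediateField.adjoin.mono K _ _ (le_sup_right (a := V)) (hSW c hc)⟩

lemma adjoin_eq_top_of_isDeltaStable
    (hδ : ∀ i a, δL i (algebraMap K L a) = algebraMap K L (δK i a)) {S : Set L}
    (hS : IntermediateField.adjoin K
      {x : L | ∃ a ∈ S, ∃ w : List (Fin m), x = w.foldr (fun i y => δL i y) a} = ⊤)
    {V : Submodule K L} (hV : IsDeltaStable (fun i => (δL i : L →ₗ[ℤ] L)) V)
    (hSV : ∀ a ∈ S, a ∈ IntermediateField.adjoin K (V : Set L)) :
    IntermediateField.adjoin K (V : Set L) = ⊤ := by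
  rw [← top_le_iff, ← hS, IntermediateField.adjoin_le_iff]
  rintro _ ⟨a, ha, w, rfl⟩
  induction w with
  | nil => exact hSV a ha
  | cons i w ih =>
    exact derivation_mem_adjoin (hδ i)
      (fun x hx => IntermediateField.subset_adjoin K _ (hV i x hx)) ih

lemma exists_isDeltaStable_adjoin_eq_top [CharZero K] (hcL : CommutingDerivations δL)
    (hδ : ∀ i a, δL i (algebraMap K L a) = algebraMap K L (δK i a))
    (hfg : FinitelyDeltaGenerated K L δL) (hnormal : IsDeltaNormal.{u} K L δK δL) :
    ∃ V : Submodule K L, Module.Finite K V ∧ IsDeltaStable (fun i => (δL i : L →ₗ[ℤ] L)) V ∧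
      IntermediateField.adjoin K (V : Set L) = ⊤ := by
  obtain ⟨S, hS⟩ := hfg
  obtain ⟨V, hfin, hV, hSV⟩ := exists_isDeltaStable_forall_mem_adjoin (S := S) fun b _ =>
    have ⟨_, hu, hunit, hbu⟩ := exists_isUnit_of_isDeltaNormal hcL hδ hnormal b
    exists_isDeltaStable_mem_adjoin hu hunit hbu
  exact ⟨V, hfin, hV, adjoin_eq_top_of_isDeltaStable hδ hS hV hSV⟩

/-- `y j = 1 ⊗ b j` is a solution of the same system in `L ⊗[K] L` whose entries are linearly
independent over `L`, so no functional kills all solutions in `L`. -/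
lemma span_isSolution_eq_top [CharZero K] (hcL : CommutingDerivations δL)
    (hδ : ∀ i a, δL i (algebraMap K L a) = algebraMap K L (δK i a))
    (hnormal : IsDeltaNormal.{u} K L δK δL) {n : Type*} [Fintype n]
    {A : Fin m → Matrix n n K} {b : n → L} (hli : LinearIndependent K b)
    (hb : IsSolution A (fun i => (δL i : L →ₗ[ℤ] L)) b) :
    Submodule.span L {c : n → L | IsSolution (fun i => (A i).map (algebraMap K L))
      (fun i => (δL i : L →ₗ[ℤ] L)) c} = ⊤ := by
  classical
  by_contra hne
  obtain ⟨f, hf, hker⟩ := Submodule.exists_le_ker_of_lt_top _ (lt_top_iff_ne_top.2 hne)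
  have hfsum (c : n → L) : ∑ j, f (Pi.single j 1) * c j = f c := by
    conv_rhs => rw [pi_eq_sum_univ' c, map_sum]
    exact Finset.sum_congr rfl fun j _ => by rw [map_smul, smul_eq_mul, mul_comm]
  obtain ⟨u, hu, hunit, hbu⟩ := exists_common_denominator _ fun j =>
    exists_isUnit_of_isDeltaNormal hcL hδ hnormal (b j)
  have hsol : IsSolution (fun i => (A i).map (algebraMap K L))
      (fun i => (tensorDerivation (hδ i) (hδ i) : L ⊗[K] L →ₗ[ℤ] L ⊗[K] L))
      fun j => (1 : L) ⊗ₜ[K] b j := by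
    intro i j
    have hbj : δL i (b j) = ∑ q, A i j q • b q := hb i j
    simp [hbj, TensorProduct.tmul_sum]
  have hzero := hsol.sum_smul_eq_zero_of_isUnit
    (fun i a => tensorDerivation_algebraMap_left (hδ i) (hδ i) a)
    (mem_denominators.2 ⟨hu, hbu⟩) hunit (l := fun j => f (Pi.single j 1))
    fun c hc => (hfsum c).trans (hker (Submodule.subset_span hc))
  have hl := Fintype.linearIndependent_iff.1 (Module.Flat.linearIndependent_one_tmul (S := L) hli)
    _ hzero
  exact hf (LinearMap.ext fun c => by simp [← hfsum c, hl])

end DeltaNormal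

section PicardVessiotOfDeltaNormal

variable {ι K L n : Type*} [Field K] [Field L] [Algebra K L] [Fintype n] [DecidableEq n]
  {δ : ι → Derivation ℤ L L}

lemma integrable_of_fundamentalMatrix {d₁ d₂ : Derivation ℤ K K} {d₁' d₂' : Derivation ℤ L L}
    (h₁ : ∀ a, d₁' (algebraMap K L a) = algebraMap K L (d₁ a))
    (h₂ : ∀ a, d₂' (algebraMap K L a) = algebraMap K L (d₂ a))
    (hcomm : ∀ x, d₁' (d₂' x) = d₂' (d₁' x)) {A₁ A₂ : Matrix n n K} {Y : GL n L}
    (hY₁ : Y.1.map d₁' = A₁.map (algebraMap K L) * Y.1)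
    (hY₂ : Y.1.map d₂' = A₂.map (algebraMap K L) * Y.1) :
    A₂.map d₁ - A₁.map d₂ = A₁ * A₂ - A₂ * A₁ := by
  apply Matrix.map_injective (algebraMap K L).injective
  have := map_sub_map_eq_of_commute hcomm hY₁ hY₂
  simp only [Matrix.map_map, Function.comp_def, h₁, h₂] at this
  simpa only [Matrix.map_sub _ (map_sub (algebraMap K L)), Matrix.map_mul, Matrix.map_map,
    Function.comp_def] using this

lemma mem_adjoin_entries_of_isSolution
    (hconst : ∀ a : L, (∀ i, δ i a = 0) → a ∈ (algebraMap K L).range) {A : ι → Matrix n n L}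
    {Y : GL n L} (hY : ∀ i, Y.1.map (δ i) = A i * Y.1) {b : n → L}
    (hb : IsSolution A (fun i => (δ i : L →ₗ[ℤ] L)) b) (j : n) :
    b j ∈ IntermediateField.adjoin K {x : L | ∃ p q, Y.1 p q = x} := by
  let W : Matrix n Unit L := Matrix.of fun p _ => b p
  have hW : ∀ i, W.map (δ i) = A i * W := map_derivation_eq_mul_iff.2 fun _ => hb
  have hYC : Y.1 * (Y⁻¹.1 * W) = W := by rw [← Matrix.mul_assoc, Y.mul_inv, Matrix.one_mul]
  change W j () ∈ _
  rw [← hYC, Matrix.mul_apply]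
  refine sum_mem fun q _ => mul_mem (IntermediateField.subset_adjoin K _ ⟨j, q, rfl⟩) ?_
  obtain ⟨a, ha⟩ := hconst ((Y⁻¹.1 * W) q ()) fun i =>
    congrFun₂ (map_derivation_inv_mul_eq_zero (hY i) (hW i)) q ()
  exact ha ▸ IntermediateField.algebraMap_mem _ a

theorem isPicardVessiot_of_isDeltaNormal {m : ℕ} {K : Type*} {L : Type u} [Field K] [CharZero K]
    [Field L] [Algebra K L] {δK : Fin m → Derivation ℤ K K} {δL : Fin m → Derivation ℤ L L}
    (hcL : CommutingDerivations δL)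
    (hδ : ∀ i a, δL i (algebraMap K L a) = algebraMap K L (δK i a))
    (hfg : FinitelyDeltaGenerated K L δL)
    (hconst : ∀ a : L, (∀ i, δL i a = 0) → a ∈ (algebraMap K L).range)
    (hnormal : IsDeltaNormal.{u} K L δK δL) : IsPicardVessiot K L δK δL := by
  obtain ⟨V, _, hV, hVtop⟩ := exists_isDeltaStable_adjoin_eq_top hcL hδ hfg hnormal
  let b := Module.finBasis K V
  obtain ⟨A, hb⟩ := hV.exists_isSolution b
  have hli : LinearIndependent K fun j => (b j : L) :=
    b.linearIndependent.map' V.subtype V.ker_subtype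
  obtain ⟨Y, hY⟩ :=
    exists_generalLinear_of_span_eq_top (span_isSolution_eq_top hcL hδ hnormal hli hb)
  have hYA := map_derivation_eq_mul_iff.2 hY
  refine ⟨hconst, _, A, Y,
    fun i j => integrable_of_fundamentalMatrix (hδ i) (hδ j) (hcL i j) (hYA i) (hYA j), hYA, ?_⟩
  have hbY := mem_adjoin_entries_of_isSolution hconst hYA (isSolution_map_algebraMap.2 hb)
  rw [← top_le_iff, ← hVtop, IntermediateField.adjoin_le_iff]
  intro x hx
  have := congrArg Subtype.val (b.sum_repr ⟨x, hx⟩)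
  rw [Submodule.coe_sum] at this
  change ∑ j, _ • (b j : L) = x at this
  exact this ▸ sum_mem fun j _ => IntermediateField.smul_mem _ (hbY j)

end PicardVessiotOfDeltaNormal

section DeltaNormalOfPicardVessiot

lemma map_mem_constantSpan {ι K L R n : Type*} [CommRing K] [CommRing L] [CommRing R] [Algebra K L]
    [Algebra L R] [Algebra K R] [IsScalarTower K L R] [Fintype n] [DecidableEq n]
    {δL : ι → Derivation ℤ L L} {δ : ι → Derivation ℤ R R}
    (hδ : ∀ i a, δ i (algebraMap L R a) = algebraMap L R (δL i a)) {τ : L →ₐ[K] R}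
    (hτ : ∀ i a, τ (δL i a) = δ i (τ a)) {A : ι → Matrix n n K} {Y : GL n L}
    (hY : ∀ i, Y.1.map (δL i) = (A i).map (algebraMap K L) * Y.1) (p q : n) :
    τ (Y.1 p q) ∈ constantSpan L δ := by
  have hmap (σ : L →ₐ[K] R) (hσ : ∀ i a, σ (δL i a) = δ i (σ a)) (i : ι) :
      (Y.1.map σ).map (δ i) = (A i).map (algebraMap K R) * Y.1.map σ := by
    have := congrArg (fun M => M.map σ) (hY i)
    simpa [Matrix.map_mul, Matrix.map_map, Function.comp_def, hσ] using this
  let Z : GL n R := Matrix.GeneralLinearGroup.map (algebraMap L R) Y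
  have hZ (i : ι) : Z.1.map (δ i) = (A i).map (algebraMap K R) * Z.1 :=
    hmap (IsScalarTower.toAlgHom K L R) (fun i a => (hδ i a).symm) i
  let C := Z⁻¹.1 * Y.1.map τ
  have hC (j k : n) : C j k ∈ constantSubring δ := fun i =>
    congrFun₂ (map_derivation_inv_mul_eq_zero (hZ i) (hmap τ hτ i)) j k
  have hZC : Z.1 * C = Y.1.map τ := by rw [← Matrix.mul_assoc, Z.mul_inv, Matrix.one_mul]
  change Y.1.map τ p q ∈ _
  rw [← hZC, Matrix.mul_apply]
  exact sum_mem fun j _ => mul_mem ((constantSpan L δ).algebraMap_mem (Y.1 p j))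
    (Algebra.subset_adjoin (hC j q))

lemma exists_isUnit_map_of_adjoin_eq_top {K L R : Type*} [Field K] [Field L] [CommRing R]
    [Algebra K L] [Algebra K R] {s : Set L} (hs : IntermediateField.adjoin K s = ⊤)
    {τ : L →ₐ[K] R} {N : Subalgebra K R} (hN : ∀ x ∈ s, τ x ∈ N) (b : L) :
    ∃ u ∈ N, IsUnit u ∧ τ b * u ∈ N := by
  have hle : Algebra.adjoin K s ≤ N.comap τ := Algebra.adjoin_le hN
  have hb : b ∈ IntermediateField.adjoin K s := hs ▸ IntermediateField.mem_top
  obtain ⟨r, hr, t, ht, rfl⟩ := IntermediateField.mem_adjoin_iff_div.1 hb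
  obtain rfl | ht0 := eq_or_ne t 0
  · exact ⟨1, one_mem N, isUnit_one, by simp⟩
  · refine ⟨τ t, hle ht, ht0.isUnit.map τ, ?_⟩
    rw [← map_mul, div_mul_cancel₀ r ht0]
    exact hle hr

theorem isDeltaNormal_of_isPicardVessiot {m : ℕ} {K L : Type*} [Field K] [Field L] [Algebra K L]
    {δK : Fin m → Derivation ℤ K K} {δL : Fin m → Derivation ℤ L L}
    (h : IsPicardVessiot K L δK δL) : IsDeltaNormal.{u} K L δK δL := by
  obtain ⟨-, n, A, Y, -, hY, hgen⟩ := h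
  intro R _ _ _ δR _ _ τs τt hτs hτt b
  let _ : Algebra L R := τs.toRingHom.toAlgebra
  have : IsScalarTower K L R := .of_algebraMap_eq fun k => (τs.commutes k).symm
  refine mem_fracSet_iff_exists_isUnit.2 <| exists_isUnit_map_of_adjoin_eq_top
    (N := (constantSpan L δR).restrictScalars K) hgen ?_ b
  rintro _ ⟨p, q, rfl⟩
  exact map_mem_constantSpan (fun i a => (hτs i a).symm) hτt hY p q

lemma finitelyDeltaGenerated_of_isPicardVessiot {m : ℕ} {K L : Type*} [Field K] [Field L]
    [Algebra K L] {δK : Fin m → Derivation ℤ K K} {δL : Fin m → Derivation ℤ L L}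
    (h : IsPicardVessiot K L δK δL) : FinitelyDeltaGenerated K L δL := by
  obtain ⟨-, n, -, Y, -, -, hgen⟩ := h
  have hfin : {x : L | ∃ p q, Y.1 p q = x}.Finite :=
    (Set.finite_range fun pq : Fin n × Fin n => Y.1 pq.1 pq.2).subset
      fun _ ⟨p, q, h⟩ => ⟨(p, q), h⟩
  refine ⟨hfin.toFinset, top_le_iff.1 (hgen.ge.trans (IntermediateField.adjoin.mono K _ _ ?_))⟩
  exact fun x hx => ⟨x, hfin.mem_toFinset.2 hx, [], rfl⟩

end DeltaNormalOfPicardVessiot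

end PicardVessiot

theorem picardVessiot_iff_deltaNormal_general {m : ℕ} {K : Type*} {L : Type u} [Field K]
    [CharZero K] [Field L] [Algebra K L] {δK : Fin m → Derivation ℤ K K}
    {δL : Fin m → Derivation ℤ L L} (hcL : CommutingDerivations δL)
    (hcompat : ∀ i a, δL i (algebraMap K L a) = algebraMap K L (δK i a)) :
    IsPicardVessiot K L δK δL ↔ FinitelyDeltaGenerated K L δL ∧
      (∀ a : L, (∀ i, δL i a = 0) → a ∈ (algebraMap K L).range) ∧
      IsDeltaNormal.{u} K L δK δL :=
  ⟨fun h => ⟨PicardVessiot.finitelyDeltaGenerated_of_isPicardVessiot h, h.1,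
      PicardVessiot.isDeltaNormal_of_isPicardVessiot h⟩,
    fun ⟨hfg, hconst, hnormal⟩ =>
      PicardVessiot.isPicardVessiot_of_isDeltaNormal hcL hcompat hfg hconst hnormal⟩

/-- Let `K` be a `Δ`-field whose constant field `K^Δ` is algebraically
closed, and let `L|K` be a finitely `Δ`-generated extension of `Δ`-fields with
`L^Δ = K^Δ`. Then `L|K` is Picard-Vessiot iff `L|K` is `Δ`-normal. -/
theorem picardVessiot_iff_deltaNormal {m : ℕ}
    (K L : Type u) [Field K] [CharZero K] [Field L] [CharZero L] [Algebra K L]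
    (δK : Fin m → Derivation ℤ K K) (δL : Fin m → Derivation ℤ L L)
    (hcK : CommutingDerivations δK) (hcL : CommutingDerivations δL)
    (hcompat : ∀ i a, δL i (algebraMap K L a) = algebraMap K L (δK i a))
    (halgcl : IsAlgClosed ↥(constantSubfield δK))
    (hfg : FinitelyDeltaGenerated K L δL)
    (hnonew : ∀ a : L, (∀ i, δL i a = 0) → a ∈ (algebraMap K L).range) :
    IsPicardVessiot K L δK δL ↔ IsDeltaNormal.{u} K L δK δL :=
  (picardVessiot_iff_deltaNormal_general hcL hcompat).trans
    ⟨fun h => h.2.2, fun hnormal => ⟨hfg, hnonew, hnormal⟩⟩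
end

section
/- Let L|K be a Δ-normal extension of Δ-fields. Then for every intermediate Δ-field K ⊆ M ⊆ L (i.e., a subfield of L containing K that is stable under all derivations in Δ), the extension L|M is Δ-normal. -/
universe u

/-- `B` is an `A`-`Δ`-algebra: the structure map `A → B` commutes with the derivations. That
the derivations commute with each other is not part of the notion; it is `CommutingDerivations`. -/
def IsDeltaAlgebra {ι A B : Type*} [CommRing A] [CommRing B] [Algebra A B]
    (δA : ι → Derivation ℤ A A) (δB : ι → Derivation ℤ B B) : Prop :=
  ∀ i a, δB i (algebraMap A B a) = algebraMap A B (δA i a)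

namespace IsDeltaAlgebra

variable {ι A B C : Type*} [CommRing A] [CommRing B] [CommRing C]
  [Algebra A B] [Algebra B C] [Algebra A C] [IsScalarTower A B C]
  {δA : ι → Derivation ℤ A A} {δB : ι → Derivation ℤ B B} {δC : ι → Derivation ℤ C C}

theorem trans (hAB : IsDeltaAlgebra δA δB) (hBC : IsDeltaAlgebra δB δC) :
    IsDeltaAlgebra δA δC := fun i a => by
  rw [IsScalarTower.algebraMap_apply A B C, hBC, hAB, ← IsScalarTower.algebraMap_apply]

theorem tower_bot (hAC : IsDeltaAlgebra δA δC) (hBC : IsDeltaAlgebra δB δC)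
    (hinj : Function.Injective (algebraMap B C)) : IsDeltaAlgebra δA δB := fun i a =>
  hinj <| calc
    algebraMap B C (δB i (algebraMap A B a))
        = δC i (algebraMap A C a) := by rw [← hBC, ← IsScalarTower.algebraMap_apply]
    _ = algebraMap B C (algebraMap A B (δA i a)) := by
      rw [hAC, ← IsScalarTower.algebraMap_apply]

end IsDeltaAlgebra

-- Restricting scalars along `K → M` turns `M`-`Δ`-algebras and their morphisms into
-- `K`-`Δ`-algebras and theirs, while `τs(L)R^Δ` depends only on the ring and its derivations.
theorem IsDeltaNormal.tower_top {m : ℕ} {K M L : Type*} [Field K] [Field M] [Field L]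
    [Algebra K M] [Algebra M L] [Algebra K L] [IsScalarTower K M L]
    {δK : Fin m → Derivation ℤ K K} {δM : Fin m → Derivation ℤ M M}
    {δL : Fin m → Derivation ℤ L L}
    (hKL : IsDeltaNormal.{u} K L δK δL) (hKM : IsDeltaAlgebra δK δM) :
    IsDeltaNormal.{u} M L δM δL := by
  intro R _ _ _ δR hcR hMR τs τt hτs hτt
  let _ : Algebra K R := Algebra.compHom R (algebraMap K M)
  have : IsScalarTower K M R := .of_algebraMap_eq fun _ => rfl
  have hKR : IsDeltaAlgebra δK δR := hKM.trans hMR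
  exact hKL R δR hcR hKR (τs.restrictScalars K) (τt.restrictScalars K) hτs hτt

set_option synthInstance.maxHeartbeats 400000 in
/-- If `L|K` is `Δ`-normal and `K ⊆ M ⊆ L` is an intermediate `Δ`-field
(a subfield of `L` containing `K` stable under all derivations), then `L|M` is `Δ`-normal. -/
theorem isDeltaNormal_of_intermediate {m : ℕ}
    (K L : Type u) [Field K] [CharZero K] [Field L] [CharZero L] [Algebra K L]
    (δK : Fin m → Derivation ℤ K K) (δL : Fin m → Derivation ℤ L L)
    (hcK : CommutingDerivations δK) (hcL : CommutingDerivations δL)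
    (hcompat : ∀ i a, δL i (algebraMap K L a) = algebraMap K L (δK i a))
    (hnormal : IsDeltaNormal.{u} K L δK δL)
    (M : IntermediateField K L)
    (hMstable : ∀ i, ∀ x ∈ M, δL i x ∈ M)
    (δM : Fin m → Derivation ℤ ↥M ↥M)
    (hδM : ∀ i (x : ↥M), (δM i x : L) = δL i (x : L)) :
    IsDeltaNormal.{u} ↥M L δM δL := by
  have hKL : IsDeltaAlgebra δK δL := hcompat
  have hML : IsDeltaAlgebra δM δL := fun i x => (hδM i x).symm
  exact hnormal.tower_top (hKL.tower_bot hML (algebraMap M L).injective)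
end

section
/- Let K be a Δ-field whose constant field K^Δ is algebraically closed, let L|K be a strongly normal extension of Δ-fields, and let K° denote the relative algebraic closure of K inside L (the set of elements of L algebraic over K, which is an intermediate Δ-field). If L|K° is a Picard-Vessiot extension, then L|K is a Picard-Vessiot extension. -/
open scoped TensorProduct

universe u

/-!
The fundamental matrix of `L|K°` is already defined over a finite extension `F|K` inside `L`, say
`δᵢ(Y) = Aᵢ Y` with `Aᵢ` over `F`. Strong normality makes `F|K` behave like a Galois extension with
respect to `L`: given an embedding `σ : F → E` over `K` into a `Δ`-field `E ⊇ L`, amalgamate `E`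
and `L` over `F` inside a `Δ`-field `M`. There the second copy of `L` lies in `L · M^Δ`, and since
`L^Δ` is algebraically closed, finitely many elements of `L · M^Δ` can be specialized back to `L`
by a `Δ`-homomorphism that sends the constants occurring in them to `L^Δ`. Applied to an algebraic
closure `E` of `L`, this shows that `σ` takes values in `L`, so there are `[F : K]` embeddings
`σ : F → L`; applied to `E = L`, it shows that each conjugate system `δᵢ(Z) = σ(Aᵢ) Z` has a
fundamental matrix `Z_σ` in `L`, where `Z_σ = Y` for the inclusion.

For a basis `b` of `F|K`, the matrix with entries `σ(bₖ) (Z_σ)ₚ_q` is then a fundamental matrix of a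
system over `K`, and its entries generate `L`.
-/

/-! ### Extending derivations -/

/-- Ring homomorphisms of `Δ`-rings that commute with the derivations. -/
def IsDeltaHom {R S : Type*} [CommRing R] [CommRing S] {m : ℕ}
    (δR : Fin m → Derivation ℤ R R) (δS : Fin m → Derivation ℤ S S) (f : R →+* S) : Prop :=
  ∀ i a, δS i (f a) = f (δR i a)

namespace IsDeltaHom

variable {R S T : Type*} [CommRing R] [CommRing S] [CommRing T] {m : ℕ}
  {δR : Fin m → Derivation ℤ R R} {δS : Fin m → Derivation ℤ S S}
  {δT : Fin m → Derivation ℤ T T} {f : R →+* S} {g : S →+* T}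

theorem comp (hg : IsDeltaHom δS δT g) (hf : IsDeltaHom δR δS f) :
    IsDeltaHom δR δT (g.comp f) := fun i a => by
  rw [RingHom.comp_apply, hg, hf, RingHom.comp_apply]

theorem map_matrix {ι κ : Type*} (hf : IsDeltaHom δR δS f) (i : Fin m) (Y : Matrix ι κ R) :
    (Y.map f).map (δS i) = (Y.map (δR i)).map f :=
  Matrix.ext fun _ _ => hf i _

end IsDeltaHom

section FormallyEtale

variable {A B : Type*} [CommRing A] [CommRing B] [Algebra A B]

theorem exists_derivation_extension [Algebra.FormallyEtale A B] (d : Derivation ℤ A A) :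
    ∃ D : Derivation ℤ B B, ∀ a, D (algebraMap A B a) = algebraMap A B (d a) := by
  let φ : Ω[A⁄ℤ] →ₗ[A] B := Algebra.linearMap A B ∘ₗ d.liftKaehlerDifferential
  let Φ : Ω[B⁄ℤ] →ₗ[B] B := φ.liftBaseChange B ∘ₗ
    (KaehlerDifferential.tensorKaehlerEquivOfFormallyEtale ℤ A B).symm.toLinearMap
  refine ⟨Φ.compDer (KaehlerDifferential.D ℤ B), fun a => ?_⟩
  simp [Φ, φ, KaehlerDifferential.tensorKaehlerEquivOfFormallyEtale_symm_D_algebraMap]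

theorem derivation_eq_zero_of_formallyUnramified [Algebra.FormallyUnramified A B] {N : Type*}
    [AddCommGroup N] [Module B N] (D : Derivation ℤ B N)
    (hD : ∀ a, D (algebraMap A B a) = 0) : D = 0 := by
  let : Module A N := Module.compHom N (algebraMap A B)
  have : IsScalarTower A B N := ⟨fun a b x => by rw [Algebra.smul_def, mul_smul]; rfl⟩
  let D' : Derivation A B N := Derivation.mk'
    { toFun := D
      map_add' := map_add D
      map_smul' := fun a b => by
        rw [Algebra.smul_def, D.leibniz, hD, smul_zero, add_zero, algebraMap_smul]; rfl }
    D.leibniz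
  have : Subsingleton (Derivation A B N) :=
    (KaehlerDifferential.linearMapEquivDerivation A B).symm.injective.subsingleton
  ext b
  exact DFunLike.congr_fun (Subsingleton.elim D' 0) b

variable {m : ℕ} {δA : Fin m → Derivation ℤ A A}

theorem exists_delta_extension [Algebra.FormallyEtale A B] (hδA : CommutingDerivations δA) :
    ∃ δB : Fin m → Derivation ℤ B B,
      CommutingDerivations δB ∧ IsDeltaHom δA δB (algebraMap A B) := by
  choose δB hδB using fun i => exists_derivation_extension (B := B) (δA i)
  refine ⟨δB, fun i j x => ?_, hδB⟩
  have hbracket : ⁅δB i, δB j⁆ = 0 := derivation_eq_zero_of_formallyUnramified (A := A) _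
    fun a => by rw [Derivation.commutator_apply, hδB, hδB, hδB, hδB, hδA i j, sub_self]
  rw [← sub_eq_zero, ← Derivation.commutator_apply, hbracket, Derivation.zero_apply]

theorem IsDeltaHom.of_comp_algebraMap {S : Type*} [CommRing S] [Algebra.FormallyUnramified A B]
    {δB : Fin m → Derivation ℤ B B} {δS : Fin m → Derivation ℤ S S} {f : B →+* S}
    (hδB : IsDeltaHom δA δB (algebraMap A B))
    (hf : IsDeltaHom δA δS (f.comp (algebraMap A B))) : IsDeltaHom δB δS f := fun i b => by
  algebraize [f]
  let D : Derivation ℤ B S :=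
    (δS i).compAlgebraMap B - (Algebra.linearMap B S).compDer (δB i)
  have hD : D = 0 := derivation_eq_zero_of_formallyUnramified (A := A) D fun a =>
    sub_eq_zero.2 <| (hf i a).trans (congrArg f (hδB i a).symm)
  exact sub_eq_zero.1 (DFunLike.congr_fun hD b)

end FormallyEtale

section TensorProduct

/- Otherwise `ℤ` acts on `A ⊗[R] B` through `A`, which is not reducibly the action used by
`Derivation ℤ`. -/
attribute [local instance] Ring.toIntAlgebra

variable {R A B : Type*} [CommRing R] [CommRing A] [CommRing B] [Algebra R A] [Algebra R B]

theorem derivation_tmul_eq_zero {N : Type*} [AddCommGroup N] [Module (A ⊗[R] B) N]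
    {D : Derivation ℤ (A ⊗[R] B) N} (hA : ∀ a, D (a ⊗ₜ 1) = 0) (hB : ∀ b, D (1 ⊗ₜ b) = 0) :
    D = 0 := by
  ext x
  induction x using TensorProduct.induction_on with
  | zero => simp
  | add x y hx hy => rw [map_add, hx, hy, map_add]
  | tmul a b =>
    rw [← mul_one a, ← one_mul b, ← Algebra.TensorProduct.tmul_mul_tmul, D.leibniz, hA, hB,
      smul_zero, smul_zero, add_zero, Derivation.zero_apply]

theorem exists_derivation_tensorProduct {dR : Derivation ℤ R R} {dA : Derivation ℤ A A}
    {dB : Derivation ℤ B B} (hA : ∀ r, dA (algebraMap R A r) = algebraMap R A (dR r))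
    (hB : ∀ r, dB (algebraMap R B r) = algebraMap R B (dR r)) :
    ∃ D : Derivation ℤ (A ⊗[R] B) (A ⊗[R] B), ∀ a b, D (a ⊗ₜ b) = dA a ⊗ₜ b + a ⊗ₜ dB b := by
  have smul_A (r : R) (a : A) : dA (r • a) = r • dA a + dR r • a := by
    rw [Algebra.smul_def, dA.leibniz, hA, algebraMap_smul, smul_eq_mul, mul_comm,
      ← Algebra.smul_def]
  have smul_B (r : R) (b : B) : dB (r • b) = r • dB b + dR r • b := by
    rw [Algebra.smul_def, dB.leibniz, hB, algebraMap_smul, smul_eq_mul, mul_comm,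
      ← Algebra.smul_def]
  let f : A →+ B →+ A ⊗[R] B := AddMonoidHom.mk' (fun a => AddMonoidHom.mk'
      (fun b => dA a ⊗ₜ b + a ⊗ₜ dB b) fun b c => by
        simp only [map_add, TensorProduct.tmul_add]; abel) fun a b => by
      ext c
      simp only [map_add, TensorProduct.add_tmul, AddMonoidHom.mk'_apply, AddMonoidHom.add_apply]
      abel
  let D : A ⊗[R] B →+ A ⊗[R] B := TensorProduct.liftAddHom f fun r a b => by
    simp only [f, AddMonoidHom.mk'_apply, smul_A, smul_B, TensorProduct.add_tmul,
      TensorProduct.tmul_add, TensorProduct.smul_tmul]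
    abel
  have hD (a : A) (b : B) : D (a ⊗ₜ b) = dA a ⊗ₜ b + a ⊗ₜ dB b := rfl
  refine ⟨Derivation.mk' D.toIntLinearMap fun x y => ?_, hD⟩
  simp only [AddMonoidHom.coe_toIntLinearMap, smul_eq_mul]
  induction x using TensorProduct.induction_on with
  | zero => simp
  | add x₁ x₂ h₁ h₂ => rw [add_mul, map_add, h₁, h₂, map_add]; ring
  | tmul a b =>
    induction y using TensorProduct.induction_on with
    | zero => simp
    | add y₁ y₂ h₁ h₂ => rw [mul_add, map_add, h₁, h₂, map_add]; ring
    | tmul a' b' =>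
      simp only [Algebra.TensorProduct.tmul_mul_tmul, hD, Derivation.leibniz, smul_eq_mul,
        mul_add, TensorProduct.add_tmul, TensorProduct.tmul_add, mul_comm a', mul_comm b']
      abel

variable {m : ℕ} {δR : Fin m → Derivation ℤ R R} {δA : Fin m → Derivation ℤ A A}
  {δB : Fin m → Derivation ℤ B B}

theorem exists_delta_tensorProduct (hcA : CommutingDerivations δA) (hcB : CommutingDerivations δB)
    (hA : IsDeltaHom δR δA (algebraMap R A)) (hB : IsDeltaHom δR δB (algebraMap R B)) :
    ∃ δ : Fin m → Derivation ℤ (A ⊗[R] B) (A ⊗[R] B), CommutingDerivations δ ∧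
      IsDeltaHom δA δ (Algebra.TensorProduct.includeLeftRingHom) ∧
      IsDeltaHom δB δ (Algebra.TensorProduct.includeRight : B →ₐ[R] A ⊗[R] B).toRingHom := by
  choose δ hδ using fun i => exists_derivation_tensorProduct (hA i) (hB i)
  refine ⟨δ, fun i j x => ?_, fun i a => by simp [hδ], fun i b => by simp [hδ]⟩
  have hbracket : ⁅δ i, δ j⁆ = 0 := derivation_tmul_eq_zero
    (fun a => by simp [Derivation.commutator_apply, hδ, hcA i j])
    (fun b => by simp [Derivation.commutator_apply, hδ, hcB i j])
  rw [← sub_eq_zero, ← Derivation.commutator_apply, hbracket, Derivation.zero_apply]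

theorem IsDeltaHom.of_tensorProduct {S : Type*} [CommRing S]
    {δ : Fin m → Derivation ℤ (A ⊗[R] B) (A ⊗[R] B)} {δS : Fin m → Derivation ℤ S S}
    {f : A ⊗[R] B →+* S}
    (hδA : IsDeltaHom δA δ (Algebra.TensorProduct.includeLeftRingHom))
    (hδB : IsDeltaHom δB δ (Algebra.TensorProduct.includeRight : B →ₐ[R] A ⊗[R] B).toRingHom)
    (hfA : IsDeltaHom δA δS (f.comp Algebra.TensorProduct.includeLeftRingHom))
    (hfB : IsDeltaHom δB δS (f.comp
      (Algebra.TensorProduct.includeRight : B →ₐ[R] A ⊗[R] B).toRingHom)) :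
    IsDeltaHom δ δS f := fun i x => by
  algebraize [f]
  let D : Derivation ℤ (A ⊗[R] B) S :=
    (δS i).compAlgebraMap (A ⊗[R] B) - (Algebra.linearMap (A ⊗[R] B) S).compDer (δ i)
  have hD : D = 0 := derivation_tmul_eq_zero
    (fun a => sub_eq_zero.2 <| (hfA i a).trans (congrArg f (hδA i a).symm))
    (fun b => sub_eq_zero.2 <| (hfB i b).trans (congrArg f (hδB i b).symm))
  exact sub_eq_zero.1 (DFunLike.congr_fun hD x)

end TensorProduct

section Amalgamation

theorem derivation_mem_maximalIdeal {A : Type*} [CommRing A] [IsLocalRing A] [Algebra ℚ A]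
    [Ring.KrullDimLE 0 A] (d : Derivation ℤ A A) {a : A}
    (ha : a ∈ IsLocalRing.maximalIdeal A) : d a ∈ IsLocalRing.maximalIdeal A := by
  have hnil : IsNilpotent a := Ring.KrullDimLE.isNilpotent_iff_mem_maximalIdeal.2 ha
  obtain ⟨n, hn⟩ : ∃ n, nilpotencyClass a = n + 1 :=
    Nat.exists_eq_succ_of_ne_zero (pos_nilpotencyClass_iff.2 hnil).ne'
  obtain ⟨hpow, hpow_ne⟩ := nilpotencyClass_eq_succ_iff.1 hn
  -- Differentiating `a ^ (n + 1) = 0` gives `(n + 1) * a ^ n * d a = 0`, so `d a` is not a unit.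
  intro hunit
  have hder : ((n + 1 : ℕ) : A) * (a ^ n * d a) = 0 := by
    have := congrArg d hpow
    rwa [map_zero, d.leibniz_pow, Nat.add_sub_cancel, smul_eq_mul, nsmul_eq_mul] at this
  have hn_unit : IsUnit ((n + 1 : ℕ) : A) := by
    simpa using (IsUnit.mk0 ((n + 1 : ℕ) : ℚ) (by positivity)).map (algebraMap ℚ A)
  exact hpow_ne ((hunit.mul_left_eq_zero).1 ((hn_unit.mul_right_eq_zero).1 hder))

variable {m : ℕ}

theorem exists_delta_residueField {A : Type*} [CommRing A] [IsLocalRing A] [Algebra ℚ A]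
    [Ring.KrullDimLE 0 A] {δ : Fin m → Derivation ℤ A A} (hδ : CommutingDerivations δ) :
    ∃ δ' : Fin m → Derivation ℤ (IsLocalRing.ResidueField A) (IsLocalRing.ResidueField A),
      CommutingDerivations δ' ∧ IsDeltaHom δ δ' (IsLocalRing.residue A) := by
  have hsurj : Function.Surjective (IsLocalRing.residue A).toIntAlgHom :=
    IsLocalRing.residue_surjective
  have hker (i : Fin m) (x : A) (hx : (IsLocalRing.residue A).toIntAlgHom x = 0) :
      (IsLocalRing.residue A).toIntAlgHom (δ i x) = 0 := by
    simp only [RingHom.toIntAlgHom_apply, IsLocalRing.residue_eq_zero_iff] at hx ⊢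
    exact derivation_mem_maximalIdeal (δ i) hx
  let δ' (i : Fin m) := Derivation.liftOfSurjective hsurj (hker i)
  have hδ' : IsDeltaHom δ δ' (IsLocalRing.residue A) := fun i =>
    Derivation.liftOfSurjective_apply hsurj (hker i)
  exact ⟨δ', fun i j => IsLocalRing.residue_surjective.forall.2 fun x => by
    rw [hδ', hδ', hδ', hδ', hδ], hδ'⟩

theorem exists_delta_amalgam {F E L : Type u} [Field F] [Field E] [CharZero E] [Field L]
    [Algebra F E] [Algebra F L] {δF : Fin m → Derivation ℤ F F} {δE : Fin m → Derivation ℤ E E}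
    {δL : Fin m → Derivation ℤ L L} (hcE : CommutingDerivations δE)
    (hcL : CommutingDerivations δL) (hE : IsDeltaHom δF δE (algebraMap F E))
    (hL : IsDeltaHom δF δL (algebraMap F L)) :
    ∃ (M : Type u) (_ : Field M) (δM : Fin m → Derivation ℤ M M) (s : E →+* M) (t : L →+* M),
      CommutingDerivations δM ∧ IsDeltaHom δE δM s ∧ IsDeltaHom δL δM t ∧
      s.comp (algebraMap F E) = t.comp (algebraMap F L) := by
  obtain ⟨δ, hc, hs, ht⟩ := exists_delta_tensorProduct hcE hcL hE hL
  obtain ⟨P, hP⟩ : Nonempty (minimalPrimes (E ⊗[F] L)) :=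
    Ideal.nonempty_minimalPrimes bot_ne_top
  have : P.IsPrime := hP.1.1
  have : Algebra.FormallyEtale (E ⊗[F] L) (Localization.AtPrime P) :=
    Algebra.FormallyEtale.of_isLocalization P.primeCompl
  have : Ring.KrullDimLE 0 (Localization.AtPrime P) := Ring.KrullDimLE.of_isLocalization P hP _
  obtain ⟨δP, hcP, hδP⟩ := exists_delta_extension (B := Localization.AtPrime P) hc
  obtain ⟨δM, hcM, hδM⟩ := exists_delta_residueField hcP
  have hSM := hδM.comp hδP
  refine ⟨IsLocalRing.ResidueField (Localization.AtPrime P), inferInstance, δM, _, _, hcM,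
    hSM.comp hs, hSM.comp ht, ?_⟩
  rw [RingHom.comp_assoc, Algebra.TensorProduct.includeLeftRingHom_comp_algebraMap]
  rfl

end Amalgamation

/-! ### Linear differential systems -/

section LinearSystem

variable {R S T : Type*} [CommRing R] [CommRing S] [CommRing T] [Algebra R S] [Algebra R T]
  {m : ℕ} {ι κ : Type*} [Fintype ι]

theorem map_map_algebraMap_mul (f : S →ₐ[R] T) (A : Matrix ι ι R) (Y : Matrix ι κ S) :
    (A.map (algebraMap R S) * Y).map f = A.map (algebraMap R T) * Y.map f := by
  ext
  simp [Matrix.mul_apply]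

theorem map_derivation_mul {μ : Type*} (d : Derivation ℤ R R) (P : Matrix μ ι R)
    (Q : Matrix ι κ R) : (P * Q).map d = P.map d * Q + P * Q.map d := by
  ext
  simp only [Matrix.map_apply, Matrix.mul_apply, Matrix.add_apply, map_sum, Derivation.leibniz,
    smul_eq_mul, ← Finset.sum_add_distrib, mul_comm, add_comm]

/-- `Y` is a matrix over `S` solving the linear differential system `δᵢ(Y) = Aᵢ Y` with
coefficients in `R`. -/
def IsMatrixSolution (δS : Fin m → Derivation ℤ S S) (A : Fin m → Matrix ι ι R)
    (Y : Matrix ι κ S) : Prop :=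
  ∀ i, Y.map (δS i) = (A i).map (algebraMap R S) * Y

namespace IsMatrixSolution

variable {δS : Fin m → Derivation ℤ S S} {δT : Fin m → Derivation ℤ T T}
  {A : Fin m → Matrix ι ι R} {Y : Matrix ι κ S} {f : S →ₐ[R] T}

theorem map (hf : IsDeltaHom δS δT (f : S →+* T)) (hY : IsMatrixSolution δS A Y) :
    IsMatrixSolution δT A (Y.map f) := fun i => by
  rw [← map_map_algebraMap_mul, ← hY]
  exact Matrix.ext fun _ _ => hf i _

theorem of_map (hf : IsDeltaHom δS δT (f : S →+* T)) (hinj : Function.Injective f)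
    (hY : IsMatrixSolution δT A (Y.map f)) : IsMatrixSolution δS A Y := fun i =>
  Matrix.map_injective hinj <| by
    beta_reduce
    rw [map_map_algebraMap_mul, ← hY]
    exact Matrix.ext fun _ _ => (hf i _).symm

end IsMatrixSolution

end LinearSystem

section PicardVessiot

variable {m : ℕ} {K L : Type*} [Field K] [Field L] [Algebra K L]
  {δK : Fin m → Derivation ℤ K K} {δL : Fin m → Derivation ℤ L L} {ι κ : Type*} [Fintype ι]

theorem IsMatrixSolution.derivation_mem_adjoin (hKL : IsDeltaHom δK δL (algebraMap K L))
    {A : Fin m → Matrix ι ι K} {Y : Matrix ι κ L} (hY : IsMatrixSolution δL A Y)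
    (i : Fin m) {x : L} (hx : x ∈ IntermediateField.adjoin K {x : L | ∃ p q, Y p q = x}) :
    δL i x ∈ IntermediateField.adjoin K {x : L | ∃ p q, Y p q = x} := by
  induction hx using IntermediateField.adjoin_induction with
  | mem x hx =>
    obtain ⟨p, q, rfl⟩ := hx
    have hpq : δL i (Y p q) = ∑ r, algebraMap K L (A i p r) * Y r q := by
      simpa [Matrix.mul_apply] using congrFun₂ (hY i) p q
    exact hpq ▸ sum_mem fun r _ => mul_mem (IntermediateField.algebraMap_mem _ _)
      (IntermediateField.subset_adjoin _ _ ⟨r, q, rfl⟩)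
  | algebraMap a => exact hKL i a ▸ IntermediateField.algebraMap_mem _ _
  | add x y _ _ hx hy => simpa only [map_add] using add_mem hx hy
  | mul x y hx' hy' hx hy =>
    rw [Derivation.leibniz]
    exact add_mem (mul_mem hx' hy) (mul_mem hy' hx)
  | inv x hx' hx =>
    rw [Derivation.leibniz_inv]
    exact mul_mem (neg_mem (pow_mem (inv_mem hx') _)) hx

theorem IsMatrixSolution.integrable [DecidableEq ι] (hcL : CommutingDerivations δL)
    (hKL : IsDeltaHom δK δL (algebraMap K L)) {A : Fin m → Matrix ι ι K} {Y : GL ι L}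
    (hY : IsMatrixSolution δL A Y.1) (i j : Fin m) :
    (A j).map (δK i) - (A i).map (δK j) = A i * A j - A j * A i := by
  have hsecond (i j : Fin m) : (Y.1.map (δL j)).map (δL i) =
      ((A j).map (δK i) + A j * A i).map (algebraMap K L) * Y.1 := by
    rw [hY, map_derivation_mul, hY, Matrix.map_add _ (map_add _), Matrix.map_mul, add_mul,
      Matrix.mul_assoc, hKL.map_matrix]
  have hcomm : (Y.1.map (δL j)).map (δL i) = (Y.1.map (δL i)).map (δL j) :=
    Matrix.ext fun p q => hcL i j _
  rw [hsecond, hsecond] at hcomm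
  have := Matrix.map_injective (algebraMap K L).injective (Y.isUnit.mul_left_injective hcomm)
  rw [sub_eq_sub_iff_add_eq_add, this, add_comm]

theorem isPicardVessiot_of_isMatrixSolution [DecidableEq ι] (hcL : CommutingDerivations δL)
    (hKL : IsDeltaHom δK δL (algebraMap K L))
    (hconst : ∀ a : L, (∀ i, δL i a = 0) → a ∈ (algebraMap K L).range)
    {A : Fin m → Matrix ι ι K} {Y : GL ι L}
    (hY : IsMatrixSolution δL A Y.1)
    (hgen : IntermediateField.adjoin K {x : L | ∃ p q, Y.1 p q = x} = ⊤) :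
    IsPicardVessiot K L δK δL := by
  let e := Fintype.equivFin ι
  have hsol : IsMatrixSolution δL (fun i => (A i).reindex e e) (Y.1.reindex e e) := fun i => by
    have := congrArg (Matrix.reindex e e) (hY i)
    simp only [Matrix.reindex_apply, Matrix.submatrix_map,
      ← Matrix.submatrix_mul_equiv _ _ _ e.symm _] at this ⊢
    exact this
  let Y' : GL (Fin (Fintype.card ι)) L := Units.map (Matrix.reindexAlgEquiv L L e).toMonoidHom Y
  refine ⟨hconst, _, _, Y', hsol.integrable (Y := Y') hcL hKL, hsol, eq_top_iff.2 ?_⟩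
  rw [← hgen]
  refine IntermediateField.adjoin.mono _ _ _ ?_
  rintro x ⟨p, q, rfl⟩
  exact ⟨e p, e q, by simp [Y']⟩

theorem IsPicardVessiot.exists_isMatrixSolution (h : IsPicardVessiot K L δK δL) :
    ∃ (n : ℕ) (A : Fin m → Matrix (Fin (n + 1)) (Fin (n + 1)) K) (Y : GL (Fin (n + 1)) L),
      IsMatrixSolution δL A Y.1 ∧
      IntermediateField.adjoin K {x : L | ∃ p q, Y.1 p q = x} = ⊤ := by
  obtain ⟨-, _ | n, A, Y, -, hY, hgen⟩ := h
  · refine ⟨0, 0, 1, fun i => ?_, eq_top_iff.2 (hgen ▸ IntermediateField.adjoin.mono _ _ _ ?_)⟩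
    · ext p q
      simp [Matrix.one_apply, apply_ite (δL i)]
    · rintro x ⟨p, -⟩
      exact p.elim0
  · exact ⟨n, A, Y, hY, hgen⟩

end PicardVessiot

/-! ### Descent of solutions along constants -/

section Constants

variable {m : ℕ}

theorem exists_algHom_apply_ne_zero {C A : Type*} [Field C] [IsAlgClosed C] [CommRing A]
    [Algebra C A] [Algebra.FiniteType C A] {a : A} (ha : ¬IsNilpotent a) :
    ∃ χ : A →ₐ[C] C, χ a ≠ 0 := by
  have : Nontrivial (Localization.Away a) := by
    rwa [← not_subsingleton_iff_nontrivial, IsLocalization.subsingleton_iff (M := .powers a)]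
  obtain ⟨I, hI⟩ := Ideal.exists_maximal (Localization.Away a)
  let : Field (Localization.Away a ⧸ I) := Ideal.Quotient.field I
  have : Algebra.FiniteType C (Localization.Away a) :=
    .trans (S := A) inferInstance (IsLocalization.finiteType_of_monoid_fg (.powers a) _)
  have : Module.Finite C (Localization.Away a ⧸ I) := finite_of_finite_type_of_isJacobsonRing C _
  let φ : Localization.Away a →ₐ[C] C :=
    (IsAlgClosed.lift : (Localization.Away a ⧸ I) →ₐ[C] C).comp (Ideal.Quotient.mkₐ C I)
  exact ⟨φ.comp (IsScalarTower.toAlgHom C A _),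
    ((IsLocalization.Away.algebraMap_isUnit a).map φ).ne_zero⟩

theorem exists_algHom_productLeftAlgHom_ne_zero {C L D : Type*} [Field C] [IsAlgClosed C]
    [CommRing L] [Algebra C L] [CommRing D] [IsReduced D] [Algebra C D] [Algebra.FiniteType C D]
    {x : L ⊗[C] D} (hx : x ≠ 0) :
    ∃ χ : D →ₐ[C] C, Algebra.TensorProduct.productLeftAlgHom (AlgHom.id L L)
      ((Algebra.ofId C L).comp χ) x ≠ 0 := by
  classical
  let b := Module.Basis.ofVectorSpace C L
  obtain ⟨k, hk⟩ : ∃ k, TensorProduct.equivFinsuppOfBasisLeft b x k ≠ 0 :=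
    Finsupp.ne_iff.1 <| (LinearEquiv.map_ne_zero_iff _).2 hx
  obtain ⟨χ, hχ⟩ := exists_algHom_apply_ne_zero (C := C) (isNilpotent_iff_eq_zero.not.2 hk)
  refine ⟨χ, fun h => hχ ?_⟩
  -- The `k`-th coordinate commutes with specialization at `χ`.
  have hcoord (y : L ⊗[C] D) : χ (TensorProduct.equivFinsuppOfBasisLeft b y k) =
      b.coord k (Algebra.TensorProduct.productLeftAlgHom (AlgHom.id L L)
        ((Algebra.ofId C L).comp χ) y) := by
    induction y using TensorProduct.induction_on with
    | zero => simp
    | add y z hy hz => simp only [map_add, Finsupp.add_apply, hy, hz]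
    | tmul l d =>
      rw [TensorProduct.equivFinsuppOfBasisLeft_apply_tmul_apply, map_smul,
        Algebra.TensorProduct.lift_tmul, AlgHom.comp_apply, Algebra.ofId_apply,
        AlgHom.id_apply, mul_comm, ← Algebra.smul_def, map_smul, smul_eq_mul, smul_eq_mul,
        mul_comm, Module.Basis.coord_apply]
  rw [hcoord, h, map_zero]

variable {L M : Type*} [Field L] [Field M] [Algebra L M]
  {δL : Fin m → Derivation ℤ L L} {δM : Fin m → Derivation ℤ M M}

theorem linearIndependent_of_constants (hLM : IsDeltaHom δL δM (algebraMap L M)) {ι : Type*}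
    {d : ι → M} (hd : ∀ k, d k ∈ constantSubfield δM)
    (hli : LinearIndependent (constantSubfield δL) d) : LinearIndependent L d := by
  classical
  suffices h : ∀ s : Finset ι, LinearIndepOn L d s from
    linearIndependent_iff_finset_linearIndependent.2 h
  intro s
  induction s using Finset.induction_on with
  | empty => rw [Finset.coe_empty]; exact linearIndepOn_empty L d
  | insert j s hj ih =>
    rw [Finset.coe_insert, linearIndepOn_insert (Finset.mem_coe.not.2 hj)]
    refine ⟨ih, fun hmem => hli.notMem_span_image (Finset.mem_coe.not.2 hj) ?_⟩
    obtain ⟨h, hsum⟩ := (Submodule.mem_span_image_finset_iff_exists_fun' L).1 hmem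
    -- Differentiating the relation shows that its coefficients are constants.
    have hconst : ∀ k ∈ s, h k ∈ constantSubfield δL := fun k hk i => by
      have hder : ∑ k ∈ s, δL i (h k) • d k = 0 := by
        rw [← hd j i, ← hsum, map_sum]
        refine Finset.sum_congr rfl fun k _ => ?_
        rw [Algebra.smul_def, Algebra.smul_def, Derivation.leibniz, hd k i, hLM, smul_zero,
          zero_add, smul_eq_mul, mul_comm]
      exact linearIndepOn_finset_iff.1 ih _ hder k hk
    rw [← hsum]
    exact sum_mem fun k hk => Submodule.smul_mem _ (⟨h k, hconst k hk⟩ : constantSubfield δL)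
      (Submodule.subset_span ⟨k, hk, rfl⟩)

theorem productLeftAlgHom_injective_of_constants (hLM : IsDeltaHom δL δM (algebraMap L M))
    {D : Subalgebra (constantSubfield δL) M} (hD : ∀ d ∈ D, d ∈ constantSubfield δM) :
    Function.Injective (Algebra.TensorProduct.productLeftAlgHom (Algebra.ofId L M) D.val) := by
  let b := Module.Basis.ofVectorSpace (constantSubfield δL) D
  have hli : LinearIndependent L fun k => (b k : M) :=
    linearIndependent_of_constants hLM (fun k => hD _ (b k).2) <|
      b.linearIndependent.map' D.val.toLinearMap (LinearMap.ker_eq_bot.2 Subtype.val_injective)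
  refine LinearMap.injective_of_linearIndependent (R := L)
    (f := (Algebra.TensorProduct.productLeftAlgHom (Algebra.ofId L M) D.val).toLinearMap)
    (Algebra.TensorProduct.basis L b).span_eq ?_
  simpa [Function.comp_def] using hli

theorem mem_constantSubfield_of_mem_adjoin (hLM : IsDeltaHom δL δM (algebraMap L M)) {c : Set M}
    (hc : c ⊆ constantSubfield δM) {x : M} (hx : x ∈ Algebra.adjoin (constantSubfield δL) c) :
    x ∈ constantSubfield δM := by
  induction hx using Algebra.adjoin_induction with
  | mem x hx => exact hc hx
  | algebraMap a => exact fun i => (hLM i a).trans <| by rw [a.2 i, map_zero]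
  | add x y _ _ hx hy => exact add_mem hx hy
  | mul x y _ _ hx hy => exact mul_mem hx hy

theorem exists_finite_mem_range_of_mem_dotSet {C : Type*} [CommRing C] [Algebra C L] [Algebra C M]
    [IsScalarTower C L M] {T : Set M} {x : M} (hx : x ∈ dotSet (Set.range (algebraMap L M)) T) :
    ∃ c ⊆ T, c.Finite ∧ ∀ D : Subalgebra C M, c ⊆ D →
      x ∈ (Algebra.TensorProduct.productLeftAlgHom (Algebra.ofId L M) D.val).range := by
  obtain ⟨n, s, t, hs, ht, rfl⟩ := hx
  refine ⟨Set.range t, Set.range_subset_iff.2 ht, Set.finite_range t, fun D hD => ?_⟩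
  refine sum_mem fun k _ => ?_
  obtain ⟨l, hl⟩ := hs k
  exact ⟨l ⊗ₜ ⟨t k, hD ⟨k, rfl⟩⟩, by simp [hl, Algebra.ofId_apply]⟩

theorem exists_tensorProduct_common_denominator {κ : Type*} [Finite κ]
    (hLM : IsDeltaHom δL δM (algebraMap L M)) {x : κ → M}
    (hx : ∀ k, x k ∈ fracSet (Set.range (algebraMap L M)) (constantSubfield δM)) :
    ∃ D : Subalgebra (constantSubfield δL) M, D.FG ∧ (∀ d ∈ D, d ∈ constantSubfield δM) ∧
      ∃ q : L ⊗[constantSubfield δL] D, q ≠ 0 ∧ ∀ k, ∃ r, x k *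
        Algebra.TensorProduct.productLeftAlgHom (Algebra.ofId L M) D.val q =
          Algebra.TensorProduct.productLeftAlgHom (Algebra.ofId L M) D.val r := by
  classical
  have := Fintype.ofFinite κ
  choose r r' hr hr' hunit hfrac using hx
  choose c hc hcfin hrange using fun k =>
    exists_finite_mem_range_of_mem_dotSet (C := constantSubfield δL) (hr k)
  choose c' hc' hcfin' hrange' using fun k =>
    exists_finite_mem_range_of_mem_dotSet (C := constantSubfield δL) (hr' k)
  let D := Algebra.adjoin (constantSubfield δL) (⋃ k, c k ∪ c' k)
  have hsub (k : κ) : c k ∪ c' k ⊆ D :=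
    (Set.subset_iUnion (fun k => c k ∪ c' k) k).trans Algebra.subset_adjoin
  choose y hy using fun k => hrange k D (Set.subset_union_left.trans (hsub k))
  choose y' hy' using fun k => hrange' k D (Set.subset_union_right.trans (hsub k))
  refine ⟨D, Subalgebra.fg_def.2 ⟨_, Set.finite_iUnion fun k => (hcfin k).union (hcfin' k), rfl⟩,
    fun d => mem_constantSubfield_of_mem_adjoin hLM
      (Set.iUnion_subset fun k => Set.union_subset (hc k) (hc' k)),
    ∏ k, y' k, fun h => ?_, fun k => ⟨y k * ∏ j ∈ Finset.univ.erase k, y' j, ?_⟩⟩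
  · obtain ⟨k, -, hk⟩ := Finset.prod_eq_zero_iff.1 <| (map_prod _ _ _).symm.trans <|
      (congrArg (Algebra.TensorProduct.productLeftAlgHom (Algebra.ofId L M) D.val) h).trans
        (map_zero _)
    exact (hunit k).ne_zero ((hy' k).symm.trans hk)
  · rw [← Finset.mul_prod_erase _ _ (Finset.mem_univ k), map_mul, map_mul, ← mul_assoc]
    exact congrArg (· * _) <|
      (congrArg (x k * ·) (hy' k)).trans ((hfrac k).trans (hy k).symm)

theorem exists_away_specialization {S T : Type*} [CommRing S] [Algebra L S] [CommRing T]
    [Algebra S T] [Algebra L T] [IsScalarTower L S T] {q : S} [IsLocalization.Away q T]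
    {δS : Fin m → Derivation ℤ S S} {δT : Fin m → Derivation ℤ T T}
    (hδT : IsDeltaHom δS δT (algebraMap S T)) {f : S →ₐ[L] M}
    (hf : IsDeltaHom δS δM (f : S →+* M)) (hinj : Function.Injective f) {g : S →ₐ[L] L}
    (hg : IsDeltaHom δS δL (g : S →+* L)) (hq : g q ≠ 0) :
    ∃ (ι : T →ₐ[L] M) (π : T →ₐ[L] L), Function.Injective ι ∧
      IsDeltaHom δT δM (ι : T →+* M) ∧ IsDeltaHom δT δL (π : T →+* L) ∧
      ∀ x r, x * f q = f r → x ∈ ι.range := by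
  have : Algebra.FormallyEtale S T := Algebra.FormallyEtale.of_isLocalization (.powers q)
  have hfq : f q ≠ 0 := fun h => hq <| by rw [(map_eq_zero_iff f hinj).1 h, map_zero]
  have hf_unit : ∀ y : Submonoid.powers q, IsUnit (f y) := by
    rintro ⟨_, n, rfl⟩
    simpa using hfq.isUnit.pow n
  have hg_unit : ∀ y : Submonoid.powers q, IsUnit (g y) := by
    rintro ⟨_, n, rfl⟩
    simpa using hq.isUnit.pow n
  let ι : T →ₐ[L] M := IsLocalization.liftAlgHom hf_unit
  let π : T →ₐ[L] L := IsLocalization.liftAlgHom hg_unit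
  have hι (y : S) : ι (algebraMap S T y) = f y := IsLocalization.lift_eq hf_unit y
  have hπ (y : S) : π (algebraMap S T y) = g y := IsLocalization.lift_eq hg_unit y
  refine ⟨ι, π, (IsLocalization.lift_injective_iff hf_unit).2 fun y z => ⟨fun h => ?_, fun h => ?_⟩,
    .of_comp_algebraMap hδT fun i a => ?_, .of_comp_algebraMap hδT fun i a => ?_,
    fun x r hxr => ⟨IsLocalization.mk' T r ⟨q, Submonoid.mem_powers q⟩,
      (IsLocalization.lift_mk'_spec hf_unit _ _ _).2 ?_⟩⟩
  · exact (hι y).symm.trans ((congrArg ι h).trans (hι z))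
  · exact congrArg _ (hinj h)
  · exact (congrArg _ (hι a)).trans <| (hf i a).trans (hι _).symm
  · exact (congrArg _ (hπ a)).trans <| (hg i a).trans (hπ _).symm
  · exact hxr.symm.trans (mul_comm _ _)

end Constants

section Specialization

variable {m : ℕ} {L M : Type u} [Field L] [Field M] [Algebra L M]
  {δL : Fin m → Derivation ℤ L L} {δM : Fin m → Derivation ℤ M M}

theorem exists_specialization [IsAlgClosed (constantSubfield δL)] {κ : Type*} [Finite κ]
    (hcL : CommutingDerivations δL) (hLM : IsDeltaHom δL δM (algebraMap L M)) {x : κ → M}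
    (hx : ∀ k, x k ∈ fracSet (Set.range (algebraMap L M)) (constantSubfield δM)) :
    ∃ (T : Type u) (_ : CommRing T) (_ : Algebra L T) (δT : Fin m → Derivation ℤ T T)
      (ι : T →ₐ[L] M) (π : T →ₐ[L] L), Function.Injective ι ∧ IsDeltaHom δT δM (ι : T →+* M) ∧
      IsDeltaHom δT δL (π : T →+* L) ∧ ∀ k, x k ∈ ι.range := by
  obtain ⟨D, hfg, hD, q, hq, hxq⟩ := exists_tensorProduct_common_denominator hLM hx
  have : Algebra.FiniteType (constantSubfield δL) D := D.fg_iff_finiteType.1 hfg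
  obtain ⟨χ, hχ⟩ := exists_algHom_productLeftAlgHom_ne_zero hq
  let δC : Fin m → Derivation ℤ (constantSubfield δL) (constantSubfield δL) := fun _ => 0
  let δD : Fin m → Derivation ℤ D D := fun _ => 0
  have hCL : IsDeltaHom δC δL (algebraMap (constantSubfield δL) L) := fun i a =>
    (a.2 i).trans (map_zero _).symm
  have hCD : IsDeltaHom δC δD (algebraMap (constantSubfield δL) D) := fun _ _ =>
    (map_zero _).symm
  have hcD : CommutingDerivations δD := fun _ _ _ => rfl
  obtain ⟨δS, hcS, hδL, hδD⟩ := exists_delta_tensorProduct hcL hcD hCL hCD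
  have : Algebra.FormallyEtale (L ⊗[constantSubfield δL] D) (Localization.Away q) :=
    Algebra.FormallyEtale.of_isLocalization (.powers q)
  obtain ⟨δT, -, hδT⟩ := exists_delta_extension (B := Localization.Away q) hcS
  have hf : IsDeltaHom δS δM (Algebra.TensorProduct.productLeftAlgHom (Algebra.ofId L M) D.val) :=
    .of_tensorProduct hδL hδD (fun i a => by simpa [Algebra.ofId_apply] using hLM i a)
      fun i d => by simpa [δD] using hD d d.2 i
  have hg : IsDeltaHom δS δL (Algebra.TensorProduct.productLeftAlgHom (AlgHom.id L L)
      ((Algebra.ofId _ L).comp χ)) :=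
    .of_tensorProduct hδL hδD (fun i a => by simp)
      fun i d => by simpa [δC, δD, Algebra.ofId_apply] using hCL i (χ d)
  obtain ⟨ι, π, hι, hιδ, hπδ, hmem⟩ := exists_away_specialization hδT hf
    (productLeftAlgHom_injective_of_constants hLM hD) hg hχ
  exact ⟨_, _, _, δT, ι, π, hι, hιδ, hπδ, fun k => (hxq k).elim (hmem _)⟩

theorem mem_range_of_isAlgebraic_of_mem_fracSet [IsAlgClosed (constantSubfield δL)]
    (hcL : CommutingDerivations δL) (hLM : IsDeltaHom δL δM (algebraMap L M)) {z : M}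
    (hz : z ∈ fracSet (Set.range (algebraMap L M)) (constantSubfield δM))
    (halg : IsAlgebraic L z) : z ∈ (algebraMap L M).range := by
  obtain ⟨T, _, _, _, ι, π, hι, -, -, hmem⟩ := exists_specialization hcL hLM fun _ : Unit => hz
  obtain ⟨y, hy⟩ := hmem ()
  have hroot : Polynomial.aeval y (minpoly L z) = 0 := hι <| by
    rw [← Polynomial.aeval_algHom_apply, map_zero]
    exact hy ▸ minpoly.aeval L _
  refine minpoly.mem_range_of_degree_eq_one _ _ <|
    Polynomial.degree_eq_one_of_irreducible_of_root (x := π y)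
      (minpoly.irreducible halg.isIntegral) ?_
  rw [Polynomial.IsRoot, ← Polynomial.coe_aeval_eq_eval, Polynomial.aeval_algHom_apply, hroot,
    map_zero]

theorem exists_isMatrixSolution_of_mem_fracSet [IsAlgClosed (constantSubfield δL)]
    {ι : Type*} [Fintype ι] [DecidableEq ι] (hcL : CommutingDerivations δL)
    (hLM : IsDeltaHom δL δM (algebraMap L M)) {A : Fin m → Matrix ι ι L} {Z : GL ι M}
    (hA : IsMatrixSolution δM A Z.1)
    (hZ : ∀ p q, Z.1 p q ∈ fracSet (Set.range (algebraMap L M)) (constantSubfield δM))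
    (hZ_inv : ∀ p q, Z⁻¹.1 p q ∈ fracSet (Set.range (algebraMap L M)) (constantSubfield δM)) :
    ∃ Y : GL ι L, IsMatrixSolution δL A Y.1 := by
  obtain ⟨T, _, _, δT, f, π, hf, hfδ, hπδ, hmem⟩ := exists_specialization hcL hLM
    (x := Sum.elim (fun k : ι × ι => Z.1 k.1 k.2) fun k : ι × ι => Z⁻¹.1 k.1 k.2)
    (Sum.forall.2 ⟨fun _ => hZ _ _, fun _ => hZ_inv _ _⟩)
  choose y hy using hmem
  let Y : Matrix ι ι T := .of fun p q => y (.inl (p, q))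
  let Y' : Matrix ι ι T := .of fun p q => y (.inr (p, q))
  have hY : Y.map f = Z.1 := Matrix.ext fun p q => hy (.inl (p, q))
  have hY' : Y'.map f = Z⁻¹.1 := Matrix.ext fun p q => hy (.inr (p, q))
  have hYY' : Y * Y' = 1 := Matrix.map_injective hf <| by
    beta_reduce
    rw [Matrix.map_mul, hY, hY', Units.mul_inv, Matrix.map_one _ (map_zero _) (map_one _)]
  have hsol : IsMatrixSolution δT A Y := .of_map hfδ hf (hY ▸ hA)
  exact ⟨Matrix.GeneralLinearGroup.map (π : T →+* L) ⟨Y, Y', hYY', mul_eq_one_comm.1 hYY'⟩,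
    hsol.map hπδ⟩

end Specialization

section StronglyNormal

variable {m : ℕ} {K F L : Type u} [Field K] [CharZero K] [Field F] [Field L] [Algebra K F]
  [Algebra.IsSeparable K F] [Algebra K L] [Algebra F L] [IsScalarTower K F L]
  {δK : Fin m → Derivation ℤ K K} {δL : Fin m → Derivation ℤ L L}

theorem StronglyNormalCond.exists_amalgam (hsn : StronglyNormalCond.{u} K L δK δL)
    (hcL : CommutingDerivations δL) (hKL : IsDeltaHom δK δL (algebraMap K L)) {E : Type u}
    [Field E] [Algebra K E] [Algebra L E] [IsScalarTower K L E]
    {δE : Fin m → Derivation ℤ E E} (hcE : CommutingDerivations δE)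
    (hLE : IsDeltaHom δL δE (algebraMap L E)) (σ : F →ₐ[K] E) :
    ∃ (M : Type u) (_ : Field M) (δM : Fin m → Derivation ℤ M M) (s : E →+* M) (t : L →+* M),
      IsDeltaHom δE δM s ∧ IsDeltaHom δL δM t ∧ (∀ x, s (σ x) = t (algebraMap F L x)) ∧
      ∀ b, t b ∈ fracSet (Set.range (s.comp (algebraMap L E))) (constantSubfield δM) := by
  have : Algebra.FormallyEtale K F := .of_isSeparable K F
  choose δF hδF using fun i => exists_derivation_extension (B := F) (δK i)
  have hKE : IsDeltaHom δK δE (algebraMap K E) :=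
    IsScalarTower.algebraMap_eq K L E ▸ hLE.comp hKL
  have hFL : IsDeltaHom δF δL (algebraMap F L) :=
    .of_comp_algebraMap hδF <| IsScalarTower.algebraMap_eq K F L ▸ hKL
  have hσ : IsDeltaHom δF δE (σ : F →+* E) :=
    .of_comp_algebraMap hδF <| σ.comp_algebraMap.symm ▸ hKE
  let : Algebra F E := (σ : F →+* E).toAlgebra
  have : CharZero E := charZero_of_injective_algebraMap (algebraMap K E).injective
  obtain ⟨M, _, δM, s, t, hcM, hs, ht, hst⟩ := exists_delta_amalgam hcE hcL hσ hFL
  let : Algebra K M := (t.comp (algebraMap K L)).toAlgebra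
  have : CharZero M := charZero_of_injective_algebraMap (algebraMap K M).injective
  have hst' (x : F) : s (σ x) = t (algebraMap F L x) := DFunLike.congr_fun hst x
  let τs : L →ₐ[K] M :=
    { s.comp (algebraMap L E) with
      commutes' := fun a => by
        have := hst' (algebraMap K F a)
        rwa [σ.commutes, ← IsScalarTower.algebraMap_apply,
          IsScalarTower.algebraMap_apply K L E] at this }
  let τt : L →ₐ[K] M := { t with commutes' := fun _ => rfl }
  exact ⟨M, _, δM, s, t, hs, ht, hst', hsn M δM hcM (ht.comp hKL) τs τt
    (fun i a => (hs.comp hLE i a).symm) fun i a => (ht i a).symm⟩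

variable [IsAlgClosed (constantSubfield δL)]

theorem StronglyNormalCond.algHom_apply_mem_range (hsn : StronglyNormalCond.{u} K L δK δL)
    (hcL : CommutingDerivations δL) (hKL : IsDeltaHom δK δL (algebraMap K L)) {E : Type u}
    [Field E] [Algebra K E] [Algebra L E] [IsScalarTower K L E]
    {δE : Fin m → Derivation ℤ E E} (hcE : CommutingDerivations δE)
    (hLE : IsDeltaHom δL δE (algebraMap L E)) (σ : F →ₐ[K] E) (x : F) :
    σ x ∈ (algebraMap L E).range := by
  obtain ⟨M, _, δM, s, t, hs, -, hst, hfrac⟩ := hsn.exists_amalgam hcL hKL hcE hLE σ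
  let : Algebra L M := (s.comp (algebraMap L E)).toAlgebra
  have halg : IsAlgebraic L (s (σ x)) := by
    have : IsAlgebraic L (σ x) :=
      ((Algebra.IsAlgebraic.isAlgebraic x).algHom σ).extendScalars (algebraMap K L).injective
    exact this.algHom ({ s with commutes' := fun _ => rfl } : E →ₐ[L] M)
  obtain ⟨l, hl⟩ := mem_range_of_isAlgebraic_of_mem_fracSet hcL (hs.comp hLE)
    (hst x ▸ hfrac (algebraMap F L x)) halg
  exact ⟨l, s.injective hl⟩

theorem StronglyNormalCond.card_algHom (hsn : StronglyNormalCond.{u} K L δK δL)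
    (hcL : CommutingDerivations δL) (hKL : IsDeltaHom δK δL (algebraMap K L))
    [FiniteDimensional K F] : Fintype.card (F →ₐ[K] L) = Module.finrank K F := by
  have : CharZero L := charZero_of_injective_algebraMap (algebraMap K L).injective
  have : Algebra.FormallyEtale L (AlgebraicClosure L) := .of_isSeparable L _
  obtain ⟨δE, hcE, hLE⟩ := exists_delta_extension (B := AlgebraicClosure L) hcL
  refine AlgHom.card_of_splits K F L fun x => Polynomial.Splits.of_splits_map
    (algebraMap L (AlgebraicClosure L)) (IsAlgClosed.splits _) fun a ha => ?_
  rw [Polynomial.map_map, ← IsScalarTower.algebraMap_eq] at ha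
  obtain ⟨σ, rfl⟩ : a ∈ Set.range fun σ : F →ₐ[K] AlgebraicClosure L => σ x := by
    rw [Algebra.IsAlgebraic.range_eval_eq_rootSet_minpoly]
    classical exact Multiset.mem_toFinset.2 ha
  exact hsn.algHom_apply_mem_range hcL hKL hcE hLE σ x

theorem StronglyNormalCond.exists_isMatrixSolution_map (hsn : StronglyNormalCond.{u} K L δK δL)
    (hcL : CommutingDerivations δL) (hKL : IsDeltaHom δK δL (algebraMap K L)) {ι : Type*}
    [Fintype ι] [DecidableEq ι] {A : Fin m → Matrix ι ι F} {Y : GL ι L}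
    (hY : IsMatrixSolution δL A Y.1) (σ : F →ₐ[K] L) :
    ∃ Z : GL ι L, IsMatrixSolution δL (fun i => (A i).map σ) Z.1 := by
  obtain ⟨M, _, δM, s, t, hs, ht, hst, hfrac⟩ :=
    hsn.exists_amalgam hcL hKL hcL (fun _ _ => rfl) σ
  let : Algebra L M := s.toAlgebra
  let : Algebra F M := (t.comp (algebraMap F L)).toAlgebra
  have hZ := hY.map (f := { t with commutes' := fun _ => rfl }) ht
  have hA (i : Fin m) : ((A i).map σ).map s = (A i).map (algebraMap F M) :=
    Matrix.ext fun p q => hst (A i p q)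
  refine exists_isMatrixSolution_of_mem_fracSet hcL hs (Z := Matrix.GeneralLinearGroup.map t Y)
    (fun i => (hZ i).trans (congrArg (· * _) (hA i).symm)) (fun p q => hfrac _) fun p q => ?_
  rw [← map_inv]
  exact hfrac _

end StronglyNormal

/-! ### Restriction of scalars along a finite extension -/

section RestrictScalars

variable {m : ℕ} {K F L : Type*} [Field K] [Field F] [Field L] [Algebra K F] [Algebra K L]
  {ι κ : Type*}

/-- The coefficient matrix over `K` of the system satisfied by all `bₖ Y`, where `b` is a basis of
`F` over `K` and `d(Y) = AY`. -/
noncomputable def restrictScalarsMatrix [DecidableEq ι] (b : Module.Basis κ K F)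
    (d : Derivation ℤ F F) (A : Matrix ι ι F) : Matrix (ι × κ) (ι × κ) K :=
  .of fun x y => b.repr ((if x.1 = y.1 then d (b x.2) else 0) + b x.2 * A x.1 y.1) y.2

/-- Solutions of the conjugate systems `d(Z) = σ(A) Z` assembled into a solution of the system
obtained by restriction of scalars: the entries are `σ(bₖ) (Z_σ)ₚ_q`. -/
def conjugateMatrix (b : κ → F) (Z : (F →ₐ[K] L) → Matrix ι ι L) :
    Matrix (ι × κ) (ι × (F →ₐ[K] L)) L :=
  .of fun x y => y.2 (b x.2) * Z y.2 x.1 y.1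

theorem isMatrixSolution_conjugateMatrix [Fintype ι] [Fintype κ] [DecidableEq ι]
    {δF : Fin m → Derivation ℤ F F} {δL : Fin m → Derivation ℤ L L} (b : Module.Basis κ K F)
    {A : Fin m → Matrix ι ι F} {Z : (F →ₐ[K] L) → Matrix ι ι L}
    (hσ : ∀ σ : F →ₐ[K] L, IsDeltaHom δF δL (σ : F →+* L))
    (hZ : ∀ σ : F →ₐ[K] L, IsMatrixSolution δL (fun i => (A i).map σ) (Z σ)) :
    IsMatrixSolution δL (fun i => restrictScalarsMatrix b (δF i) (A i)) (conjugateMatrix b Z) := by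
  intro i
  ext ⟨p, k⟩ ⟨q, σ⟩
  have hrepr (y : F) : ∑ l, algebraMap K L (b.repr y l) * σ (b l) = σ y := by
    conv_rhs => rw [← b.sum_repr y]
    simp [Algebra.smul_def]
  have hrow (y : ι → F) : ∑ r, ∑ l, algebraMap K L (b.repr (y r) l) * (σ (b l) * Z σ r q) =
      ∑ r, σ (y r) * Z σ r q := by
    simp only [← mul_assoc, ← Finset.sum_mul, hrepr]
  have hZ' : δL i (Z σ p q) = ∑ r, σ (A i p r) * Z σ r q := by
    simpa [Matrix.mul_apply] using congrFun₂ (hZ σ i) p q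
  have hσ' : δL i (σ (b k)) = σ (δF i (b k)) := hσ σ i (b k)
  have hsum := calc
    δL i (σ (b k) * Z σ p q)
      = σ (δF i (b k)) * Z σ p q + ∑ r, σ (b k) * σ (A i p r) * Z σ r q := by
        rw [Derivation.leibniz, hZ', hσ', smul_eq_mul, smul_eq_mul, Finset.mul_sum, add_comm,
          mul_comm (Z σ p q)]
        simp only [mul_assoc]
    _ = ∑ r, σ ((if p = r then δF i (b k) else 0) + b k * A i p r) * Z σ r q := by
        simp [add_mul, Finset.sum_add_distrib, apply_ite σ]
  rw [Matrix.mul_apply, Fintype.sum_prod_type]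
  exact hsum.trans (hrow _).symm

theorem isUnit_conjugateMatrix [Fintype ι] [DecidableEq ι] [FiniteDimensional K F]
    [DecidableEq (F →ₐ[K] L)] (b : Module.Basis (F →ₐ[K] L) K F)
    {Z : (F →ₐ[K] L) → Matrix ι ι L} (hZ : ∀ σ, IsUnit (Z σ)) :
    IsUnit (conjugateMatrix b Z) := by
  have hfac : conjugateMatrix b Z = Matrix.kroneckerMap (· * ·) (1 : Matrix ι ι L)
      (Algebra.embeddingsMatrix K L b) * Matrix.blockDiagonal Z := by
    ext x y
    simp [conjugateMatrix, Matrix.mul_apply, Fintype.sum_prod_type, Matrix.blockDiagonal_apply,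
      Matrix.one_apply, Algebra.embeddingsMatrix]
  have hb : IsUnit (Algebra.embeddingsMatrix K L b) := by
    let restrict : (F →ₗ[K] L) ≃ₗ[L] (F →ₐ[K] L) → L := (b.constr L).symm
    exact Matrix.linearIndependent_cols_iff_isUnit.1 <|
      (linearIndependent_algHom_toLinearMap K F L).map' restrict.toLinearMap restrict.ker
  rw [hfac, Matrix.isUnit_iff_isUnit_det, Matrix.det_mul, Matrix.det_kronecker,
    Matrix.det_blockDiagonal, Matrix.det_one, one_pow, one_mul]
  exact (((Matrix.isUnit_iff_isUnit_det _).1 hb).pow _).mul <|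
    IsUnit.prod_univ_iff.2 fun σ => (Matrix.isUnit_iff_isUnit_det _).1 (hZ σ)

theorem adjoin_conjugateMatrix_eq_top [Algebra F L] [IsScalarTower K F L] [Nonempty ι] [Fintype ι]
    [DecidableEq ι] [Finite κ] (b : Module.Basis κ K F) {Y : GL ι L}
    {Z : (F →ₐ[K] L) → Matrix ι ι L} (hZ : Z (IsScalarTower.toAlgHom K F L) = Y.1)
    (hY : IntermediateField.adjoin F {x : L | ∃ p q, Y.1 p q = x} = ⊤) :
    IntermediateField.adjoin K {x : L | ∃ p q, conjugateMatrix b Z p q = x} = ⊤ := by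
  have := Fintype.ofFinite κ
  set N := IntermediateField.adjoin K {x : L | ∃ p q, conjugateMatrix b Z p q = x}
  have hmul (a : F) (p q : ι) : algebraMap F L a * Y.1 p q ∈ N := by
    rw [← b.sum_repr a, map_sum, Finset.sum_mul]
    refine sum_mem fun k _ => ?_
    rw [Algebra.smul_def, map_mul, mul_assoc, ← IsScalarTower.algebraMap_apply]
    refine mul_mem (N.algebraMap_mem _) (IntermediateField.subset_adjoin K _
      ⟨(p, k), (q, IsScalarTower.toAlgHom K F L), ?_⟩)
    simp [conjugateMatrix, hZ]
  have hentry (p q : ι) : Y.1 p q ∈ N := by simpa using hmul 1 p q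
  obtain ⟨p, q, hpq⟩ : ∃ p q, Y.1 p q ≠ 0 := by
    by_contra! h
    exact Y.ne_zero (Matrix.ext h)
  have hF (a : F) : algebraMap F L a ∈ N := by
    simpa [hpq] using div_mem (hmul a p q) (hentry p q)
  refine eq_top_iff.2 fun x _ => ?_
  have hx : x ∈ IntermediateField.adjoin F {x : L | ∃ p q, Y.1 p q = x} := hY ▸ trivial
  induction hx using IntermediateField.adjoin_induction with
  | mem x hx => obtain ⟨p, q, rfl⟩ := hx; exact hentry p q
  | algebraMap a => exact hF a
  | add x y _ _ hx hy => exact add_mem (hx trivial) (hy trivial)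
  | inv x _ hx => exact inv_mem (hx trivial)
  | mul x y _ _ hx hy => exact mul_mem (hx trivial) (hy trivial)

end RestrictScalars

section Descent

variable {m : ℕ} {K L : Type*} [Field K] [Field L] [Algebra K L]

theorem exists_finiteDimensional_subset_adjoin (K₀ : IntermediateField K L)
    [Algebra.IsAlgebraic K K₀] {E : Set L} (hE : IntermediateField.adjoin K₀ E = ⊤)
    {S T : Set L} (hS : S.Finite) (hT : T.Finite) (hTK₀ : T ⊆ K₀) :
    ∃ F : IntermediateField K L, FiniteDimensional K F ∧ T ⊆ F ∧
      S ⊆ IntermediateField.adjoin F E := by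
  classical
  have hgen : IntermediateField.adjoin K ((K₀ : Set L) ∪ E) = ⊤ := by
    rw [← IntermediateField.restrictScalars_adjoin, hE, IntermediateField.restrictScalars_top]
  choose G hGE hsG using fun s : L =>
    IntermediateField.exists_finset_of_mem_adjoin (hgen ▸ IntermediateField.mem_top (x := s))
  have hfin : (T ∪ (⋃ s ∈ S, (G s : Set L)) ∩ K₀).Finite :=
    hT.union <| (hS.biUnion fun s _ => (G s).finite_toSet).inter_of_left _
  let F := IntermediateField.adjoin K (T ∪ (⋃ s ∈ S, (G s : Set L)) ∩ K₀)
  have : Finite ↥(T ∪ (⋃ s ∈ S, (G s : Set L)) ∩ K₀) := hfin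
  refine ⟨F, IntermediateField.finiteDimensional_adjoin fun x hx => ?_,
    Set.subset_union_left.trans (IntermediateField.subset_adjoin _ _), fun s hs => ?_⟩
  · have hx₀ : x ∈ K₀ := hx.elim (@hTK₀ x) And.right
    exact ((Algebra.IsAlgebraic.isAlgebraic (R := K) (⟨x, hx₀⟩ : K₀)).algHom K₀.val).isIntegral
  · suffices IntermediateField.adjoin K (G s : Set L) ≤
        (IntermediateField.adjoin F E).restrictScalars K from this (hsG s)
    refine IntermediateField.adjoin_le_iff.2 fun x hx => (hGE s hx).elim (fun hx₀ => ?_)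
      fun hxE => IntermediateField.subset_adjoin F E hxE
    exact (IntermediateField.adjoin F E).algebraMap_mem
      ⟨x, IntermediateField.subset_adjoin K _ (.inr ⟨Set.mem_biUnion hs hx, hx₀⟩)⟩

theorem FinitelyDeltaGenerated.exists_finiteDimensional_isMatrixSolution [CharZero K]
    {δK : Fin m → Derivation ℤ K K} {δL : Fin m → Derivation ℤ L L}
    (hfg : FinitelyDeltaGenerated K L δL) (hKL : IsDeltaHom δK δL (algebraMap K L))
    (K₀ : IntermediateField K L) [Algebra.IsAlgebraic K K₀] {ι : Type*} [Fintype ι]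
    {A : Fin m → Matrix ι ι K₀} {Y : Matrix ι ι L} (hY : IsMatrixSolution δL A Y)
    (hgen : IntermediateField.adjoin K₀ {x : L | ∃ p q, Y p q = x} = ⊤) :
    ∃ (F : IntermediateField K L) (A' : Fin m → Matrix ι ι F), FiniteDimensional K F ∧
      IsMatrixSolution δL A' Y ∧ IntermediateField.adjoin F {x : L | ∃ p q, Y p q = x} = ⊤ := by
  obtain ⟨S, hS⟩ := hfg
  obtain ⟨F, hF, hAF, hSF⟩ := exists_finiteDimensional_subset_adjoin K₀ hgen S.finite_toSet
    (Set.finite_range fun x : Fin m × ι × ι => (A x.1 x.2.1 x.2.2 : L))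
    (Set.range_subset_iff.2 fun _ => SetLike.coe_mem _)
  let A' (i : Fin m) : Matrix ι ι F := .of fun p q => ⟨A i p q, hAF ⟨(i, p, q), rfl⟩⟩
  have hY' : IsMatrixSolution δL A' Y := fun i =>
    (hY i).trans <| congrArg (· * Y) (Matrix.ext fun _ _ => rfl)
  have : Algebra.FormallyEtale K F := .of_isSeparable K F
  choose δF hδF using fun i => exists_derivation_extension (B := F) (δK i)
  have hFL : IsDeltaHom δF δL (algebraMap F L) := .of_comp_algebraMap hδF <|
    IsScalarTower.algebraMap_eq K F L ▸ hKL
  refine ⟨F, A', hF, hY', IntermediateField.restrictScalars_injective K <| eq_top_iff.2 ?_⟩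
  rw [← hS, IntermediateField.adjoin_le_iff]
  rintro x ⟨a, ha, w, rfl⟩
  induction w with
  | nil => exact hSF ha
  | cons i w ih => exact hY'.derivation_mem_adjoin hFL i ih

theorem isAlgClosed_constantSubfield {m : ℕ} {K L : Type u} [Field K] [Field L] [Algebra K L]
    {δK : Fin m → Derivation ℤ K K} {δL : Fin m → Derivation ℤ L L}
    [IsAlgClosed (constantSubfield δK)] (hKL : IsDeltaHom δK δL (algebraMap K L))
    (hconst : ∀ a : L, (∀ i, δL i a = 0) → a ∈ (algebraMap K L).range) :
    IsAlgClosed (constantSubfield δL) := by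
  let f : constantSubfield δK →+* constantSubfield δL :=
    ((algebraMap K L).comp (constantSubfield δK).subtype).codRestrict (constantSubfield δL)
      fun a i => (hKL i a).trans (by rw [a.2 i, map_zero])
  refine IsAlgClosed.of_ringEquiv _ _ (RingEquiv.ofBijective f ⟨f.injective, fun ⟨b, hb⟩ => ?_⟩)
  obtain ⟨a, rfl⟩ := hconst b hb
  refine ⟨⟨a, fun i => (algebraMap K L).injective ?_⟩, rfl⟩
  rw [← hKL, hb, map_zero]

theorem StronglyNormalCond.isPicardVessiot_of_finiteDimensional {m : ℕ} {K F L : Type u}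
    [Field K] [CharZero K] [Field F] [Field L] [Algebra K F] [FiniteDimensional K F]
    [Algebra K L] [Algebra F L] [IsScalarTower K F L]
    {δK : Fin m → Derivation ℤ K K} {δL : Fin m → Derivation ℤ L L}
    [IsAlgClosed (constantSubfield δL)] (hsn : StronglyNormalCond.{u} K L δK δL)
    (hcL : CommutingDerivations δL) (hKL : IsDeltaHom δK δL (algebraMap K L))
    (hconst : ∀ a : L, (∀ i, δL i a = 0) → a ∈ (algebraMap K L).range)
    {ι : Type*} [Fintype ι] [Nonempty ι] [DecidableEq ι] {A : Fin m → Matrix ι ι F} {Y : GL ι L}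
    (hY : IsMatrixSolution δL A Y.1)
    (hgen : IntermediateField.adjoin F {x : L | ∃ p q, Y.1 p q = x} = ⊤) :
    IsPicardVessiot K L δK δL := by
  classical
  have : Algebra.FormallyEtale K F := .of_isSeparable K F
  choose δF hδF using fun i => exists_derivation_extension (B := F) (δK i)
  have hσ (σ : F →ₐ[K] L) : IsDeltaHom δF δL (σ : F →+* L) :=
    .of_comp_algebraMap hδF <| σ.comp_algebraMap.symm ▸ hKL
  have hZ (σ : F →ₐ[K] L) : ∃ Z : GL ι L, IsMatrixSolution δL (fun i => (A i).map σ) Z.1 ∧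
      (σ = IsScalarTower.toAlgHom K F L → Z = Y) := by
    by_cases h : σ = IsScalarTower.toAlgHom K F L
    · exact ⟨Y, h ▸ hY, fun _ => rfl⟩
    · exact (hsn.exists_isMatrixSolution_map hcL hKL hY σ).imp fun _ hZ => ⟨hZ, (absurd · h)⟩
  choose Z hZsol hZY using hZ
  let b : Module.Basis (F →ₐ[K] L) K F := (Module.finBasis K F).reindex <|
    Fintype.equivOfCardEq <| (Fintype.card_fin _).trans (hsn.card_algHom hcL hKL).symm
  obtain ⟨W, hW⟩ := isUnit_conjugateMatrix b fun σ => (Z σ).isUnit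
  refine isPicardVessiot_of_isMatrixSolution hcL hKL hconst (Y := W)
    (hW ▸ isMatrixSolution_conjugateMatrix b hσ hZsol) ?_
  rw [hW]
  exact adjoin_conjugateMatrix_eq_top b (congrArg _ (hZY _ rfl)) hgen

end Descent

theorem isPicardVessiot_of_stronglyNormal_of_relAlgClosure_general {m : ℕ}
    {K L : Type u} [Field K] [CharZero K] [Field L] [Algebra K L]
    {δK : Fin m → Derivation ℤ K K} {δL : Fin m → Derivation ℤ L L}
    (hcL : CommutingDerivations δL) (hKL : IsDeltaHom δK δL (algebraMap K L))
    [IsAlgClosed (constantSubfield δK)] (hfg : FinitelyDeltaGenerated K L δL)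
    (hconst : ∀ a : L, (∀ i, δL i a = 0) → a ∈ (algebraMap K L).range)
    (hsn : StronglyNormalCond.{u} K L δK δL)
    (K₀ : IntermediateField K L) [Algebra.IsAlgebraic K K₀] {ι : Type*} [Fintype ι] [Nonempty ι]
    [DecidableEq ι] {A₀ : Fin m → Matrix ι ι K₀} {Y : GL ι L} (hY₀ : IsMatrixSolution δL A₀ Y.1)
    (hgen₀ : IntermediateField.adjoin K₀ {x : L | ∃ p q, Y.1 p q = x} = ⊤) :
    IsPicardVessiot K L δK δL := by
  obtain ⟨F, A, hF, hY, hgen⟩ := hfg.exists_finiteDimensional_isMatrixSolution hKL K₀ hY₀ hgen₀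
  have : IsAlgClosed (constantSubfield δL) := isAlgClosed_constantSubfield hKL hconst
  exact hsn.isPicardVessiot_of_finiteDimensional hcL hKL hconst hY hgen

set_option synthInstance.maxHeartbeats 400000 in
/-- Let `K` be a `Δ`-field with algebraically closed constant field, and
`L|K` a strongly normal extension. If `L|K°` is Picard-Vessiot, where `K°` is the relative
algebraic closure of `K` in `L` (an intermediate `Δ`-field), then `L|K` is Picard-Vessiot. -/
theorem isPicardVessiot_of_stronglyNormal_of_relAlgClosure {m : ℕ}
    (K L : Type u) [Field K] [CharZero K] [Field L] [CharZero L] [Algebra K L]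
    (δK : Fin m → Derivation ℤ K K) (δL : Fin m → Derivation ℤ L L)
    (hcK : CommutingDerivations δK) (hcL : CommutingDerivations δL)
    (hcompat : ∀ i a, δL i (algebraMap K L a) = algebraMap K L (δK i a))
    (halgcl : IsAlgClosed ↥(constantSubfield δK))
    -- `L|K` is strongly normal:
    (hfg : FinitelyDeltaGenerated K L δL)
    (hnonew : ∀ a : L, (∀ i, δL i a = 0) → a ∈ (algebraMap K L).range)
    (hsn : StronglyNormalCond.{u} K L δK δL)
    -- `K°`, the relative algebraic closure of `K` in `L`, with its induced `Δ`-structure: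
    (K₀ : IntermediateField K L) (hK₀ : ∀ x : L, x ∈ K₀ ↔ IsAlgebraic K x)
    (δK₀ : Fin m → Derivation ℤ ↥K₀ ↥K₀)
    (hδK₀ : ∀ i (x : ↥K₀), (δK₀ i x : L) = δL i (x : L))
    -- `L|K°` is Picard-Vessiot:
    (hPV : IsPicardVessiot ↥K₀ L δK₀ δL) :
    IsPicardVessiot K L δK δL := by
  have : Algebra.IsAlgebraic K K₀ :=
    ⟨fun x => (isAlgebraic_algHom_iff K₀.val K₀.val.injective).1 ((hK₀ x).1 x.2)⟩
  obtain ⟨n, A, Y, hY, hgen⟩ := hPV.exists_isMatrixSolution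
  exact isPicardVessiot_of_stronglyNormal_of_relAlgClosure_general hcL hcompat hfg hnonew hsn K₀
    hY hgen
end

section
/- Let L|K be an extension of fields of characteristic zero such that K is relatively algebraically closed in L (every element of L algebraic over K lies in K). Then every invertible element u of L ⊗_K L is of the form u = a ⊗ b for some nonzero a, b ∈ L. -/
open scoped TensorProduct

/-!
Let `B` be a `K`-algebra such that `F ⊗ B` is a domain for every field `F` over `K`; over a perfect
`K`, any `B = L` in which `K` is algebraically closed qualifies, by reduction to finite `F`.
Take a unit `u` of `L ⊗ B`, two homomorphisms `f g : B → C` and a valuation ring `V` of `L` over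
`K`. Since `V/𝔪 ⊗ B` is a domain, the argument of Gauss's lemma gives `u = a u'` with `a ∈ L` and
`u'` a unit of `V ⊗ B`. The scalar `a` cancels in the ratio `w = (id ⊗ f)(u) / (id ⊗ g)(u)`, so `w`
comes from `V ⊗ C`. The valuation rings of `L` over `K` intersect in `K`, whence `w = 1 ⊗ c`.

For the two inclusions `f, g : B → B ⊗ B` the resulting identity `u₁₂ = c₂₃ u₁₃` makes `u` a pure
tensor: contracting the first factor against a functional gives `b ⊗ 1 = c (1 ⊗ b)` with `b ≠ 0`,
hence `u₁₂ (1 ⊗ 1 ⊗ b) = u₁₃ (1 ⊗ b ⊗ 1)`, and contracting the third factor gives `u = a ⊗ b`.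
-/

open Algebra.TensorProduct Polynomial

section RTensor

variable {K S A C B ι : Type*} [CommSemiring K] [CommSemiring S] [Algebra K S]
  [Semiring A] [Algebra K A] [Algebra S A] [IsScalarTower K S A]
  [Semiring C] [Algebra K C] [Algebra S C] [IsScalarTower K S C]
  [Semiring B] [Algebra K B]

theorem baseChange_repr_rTensor (b : Module.Basis ι K B) (φ : A →ₐ[S] C) (x : A ⊗[K] B) (i : ι) :
    (b.baseChange C).repr (rTensor B φ x) i = φ ((b.baseChange A).repr x i) := by
  induction x with
  | zero => simp
  | add x y hx hy => simp [hx, hy]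
  | tmul a m => simp [← AlgHom.map_smul_of_tower]

theorem mem_range_rTensor_iff (b : Module.Basis ι K B) {φ : A →ₐ[S] C} {x : C ⊗[K] B} :
    x ∈ (rTensor B φ).range ↔ ∀ i, (b.baseChange C).repr x i ∈ φ.range := by
  refine ⟨?_, fun h => ?_⟩
  · rintro ⟨y, rfl⟩ i
    exact ⟨_, (baseChange_repr_rTensor b φ y i).symm⟩
  · rw [← (b.baseChange C).linearCombination_repr x]
    refine Subalgebra.sum_mem _ fun i _ => ?_
    obtain ⟨a, ha⟩ := h i
    exact ⟨a ⊗ₜ b i, by simp [← ha, TensorProduct.smul_tmul']⟩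

theorem rTensor_injective [Module.Flat K B] {φ : A →ₐ[S] C} (hφ : Function.Injective φ) :
    Function.Injective (rTensor (R := K) B φ) :=
  Module.Flat.rTensor_preserves_injective_linearMap (M := B)
    (φ.restrictScalars K).toLinearMap hφ

end RTensor

section NoZeroDivisors

variable {K A B : Type*} [CommRing K] [CommRing A] [Algebra K A] [Ring B] [Algebra K B]
  [Module.Free K B]

theorem noZeroDivisors_tensorProduct_of_forall_isMaximal [IsDomain A] [IsJacobsonRing A]
    (h : ∀ (m : Ideal A) [m.IsMaximal], NoZeroDivisors ((A ⧸ m) ⊗[K] B)) :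
    NoZeroDivisors (A ⊗[K] B) := by
  let b := Module.Free.chooseBasis K B
  refine ⟨fun {x y} hxy => ?_⟩
  by_contra! ⟨hx, hy⟩
  obtain ⟨i, hi⟩ : ∃ i, (b.baseChange A).repr x i ≠ 0 :=
    Finsupp.ne_iff.1 ((b.baseChange A).repr.map_ne_zero_iff.2 hx)
  obtain ⟨j, hj⟩ : ∃ j, (b.baseChange A).repr y j ≠ 0 :=
    Finsupp.ne_iff.1 ((b.baseChange A).repr.map_ne_zero_iff.2 hy)
  obtain ⟨m, hm, hij⟩ : ∃ m : Ideal A, m.IsMaximal ∧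
      (b.baseChange A).repr x i * (b.baseChange A).repr y j ∉ m := by
    by_contra! hall
    have hjac : (⊥ : Ideal A).jacobson = ⊥ :=
      IsJacobsonRing.out inferInstance Ideal.isPrime_bot.isRadical
    exact mul_ne_zero hi hj <|
      Ideal.mem_bot.1 <| hjac ▸ Ideal.mem_sInf.2 fun {m} hm => hall m hm.2
  have := h m
  let π : A ⊗[K] B →ₐ[K] (A ⧸ m) ⊗[K] B := rTensor B (Ideal.Quotient.mkₐ K m)
  have hπ (z : A ⊗[K] B) (k) (hk : (b.baseChange A).repr z k ∉ m) : π z ≠ 0 := by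
    intro hz
    refine hk (Ideal.Quotient.eq_zero_iff_mem.1 ?_)
    simpa [π, hz] using (baseChange_repr_rTensor b (Ideal.Quotient.mkₐ K m) z k).symm
  refine mul_ne_zero (hπ x i fun hmem => hij (m.mul_mem_right _ hmem))
    (hπ y j fun hmem => hij (m.mul_mem_left _ hmem)) ?_
  rw [← map_mul, hxy, map_zero]

theorem noZeroDivisors_tensorProduct_of_forall_fg
    (h : ∀ C : Subalgebra K A, C.FG → NoZeroDivisors (C ⊗[K] B)) :
    NoZeroDivisors (A ⊗[K] B) := by
  let b := Module.Free.chooseBasis K B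
  refine ⟨fun {x y} hxy => ?_⟩
  let coords : Set A := Set.range ((b.baseChange A).repr x) ∪ Set.range ((b.baseChange A).repr y)
  let C := Algebra.adjoin K coords
  have hC : C.FG := Subalgebra.fg_def.2
    ⟨coords, (Finsupp.finite_range _).union (Finsupp.finite_range _), rfl⟩
  have := h C hC
  obtain ⟨x', hx'⟩ : x ∈ (rTensor B C.val).range := (mem_range_rTensor_iff b).2 fun i =>
    ⟨⟨_, Algebra.subset_adjoin (.inl ⟨i, rfl⟩)⟩, rfl⟩
  obtain ⟨y', hy'⟩ : y ∈ (rTensor B C.val).range := (mem_range_rTensor_iff b).2 fun i =>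
    ⟨⟨_, Algebra.subset_adjoin (.inr ⟨i, rfl⟩)⟩, rfl⟩
  have hxy' : x' * y' = 0 := rTensor_injective (φ := C.val) Subtype.val_injective <| by
    rw [map_mul, map_zero]
    exact hx' ▸ hy' ▸ hxy
  refine (mul_eq_zero.1 hxy').imp ?_ ?_
  · rintro rfl
    simp [← hx']
  · rintro rfl
    simp [← hy']

end NoZeroDivisors

theorem minpoly_eq_map_minpoly {K L E : Type*} [Field K] [Field L] [Algebra K L]
    [IsIntegrallyClosedIn K L] [CommRing E] [Algebra K E] [Algebra L E]
    [IsScalarTower K L E] {α : E} (hα : IsIntegral K α) :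
    minpoly L α = (minpoly K α).map (algebraMap K L) := by
  obtain ⟨q, hq⟩ : ∃ q : K[X], q.map (algebraMap K L) = minpoly L α := by
    refine (mem_lifts _).1 <| (lifts_iff_coeff_lifts _).2 fun n => ?_
    exact IsIntegrallyClosedIn.isIntegral_iff.1 <| isIntegral_coeff_of_dvd _ _
      (minpoly.monic hα) (minpoly.monic hα.tower_top) (minpoly.dvd_map_of_isScalarTower K L α) n
  have hqα : aeval α q = 0 := by
    rw [← aeval_map_algebraMap L, hq, minpoly.aeval]
  refine eq_of_monic_of_associated (minpoly.monic hα.tower_top) ((minpoly.monic hα).map _) <|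
    associated_of_dvd_dvd (minpoly.dvd_map_of_isScalarTower K L α) ?_
  rw [← hq]
  exact Polynomial.map_dvd _ (minpoly.dvd K α hqα)

theorem isDomain_tensorProduct_of_isSeparable {K L F : Type*} [Field K] [Field L] [Algebra K L]
    [IsIntegrallyClosedIn K L] [Field F] [Algebra K F] [FiniteDimensional K F]
    [Algebra.IsSeparable K F] : IsDomain (F ⊗[K] L) := by
  let f : F →ₐ[K] AlgebraicClosure L := IsAlgClosed.lift
  let pb := Field.powerBasisOfFiniteOfSeparable K F
  have hdeg : (minpoly L (f pb.gen)).natDegree = pb.dim := by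
    rw [minpoly_eq_map_minpoly (pb.isIntegral_gen.map f), natDegree_map,
      minpoly.algHom_eq f f.injective, pb.natDegree_minpoly]
  have hli : LinearIndependent L fun i : Fin pb.dim => f pb.gen ^ (i : ℕ) :=
    (linearIndependent_pow (f pb.gen)).comp (Fin.cast hdeg.symm) (Fin.cast_injective _)
  have hdisj : f.fieldRange.LinearDisjoint L := by
    refine .of_basis_left (pb.basis.map (AlgEquiv.ofInjectiveField f).toLinearEquiv) ?_
    convert hli with i
    exact (congrArg f (pb.basis_eq_pow i)).trans (map_pow f _ _)
  have : IsDomain (f.range ⊗[K] L) := hdisj.isDomain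
  exact (congr (AlgEquiv.ofInjectiveField f) (AlgEquiv.refl : L ≃ₐ[K] L)).toMulEquiv.isDomain

theorem isDomain_tensorProduct {K L A : Type*} [Field K] [PerfectField K] [Field L] [Algebra K L]
    [IsIntegrallyClosedIn K L] [CommRing A] [IsDomain A] [Algebra K A] : IsDomain (A ⊗[K] L) := by
  have : NoZeroDivisors (A ⊗[K] L) := by
    refine noZeroDivisors_tensorProduct_of_forall_fg fun C hC => ?_
    have : Algebra.FiniteType K C := C.fg_iff_finiteType.1 hC
    have : IsJacobsonRing C := isJacobsonRing_of_finiteType (A := K)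
    refine noZeroDivisors_tensorProduct_of_forall_isMaximal fun m _ => ?_
    let := Ideal.Quotient.field m
    have : FiniteDimensional K (C ⧸ m) := finite_of_finite_type_of_isJacobsonRing K (C ⧸ m)
    exact isDomain_tensorProduct_of_isSeparable.to_noZeroDivisors
  exact NoZeroDivisors.to_isDomain _

section Gauss

variable {K V L B : Type*} [CommRing K] [CommRing V] [IsDomain V] [ValuationRing V] [Algebra K V]
  [Field L] [Algebra K L] [Algebra V L] [IsScalarTower K V L] [IsFractionRing V L]
  [CommRing B] [Algebra K B] [Module.Free K B]

open IsLocalRing (ResidueField)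

variable (V) in
theorem exists_eq_smul_rTensor_and_residue_ne_zero {u : L ⊗[K] B} (hu : u ≠ 0) :
    ∃ (a : L) (u' : V ⊗[K] B), a ≠ 0 ∧ u = a • rTensor B (Algebra.ofId V L) u' ∧
      rTensor B (Algebra.ofId V (ResidueField V)) u' ≠ 0 := by
  let b := Module.Free.chooseBasis K B
  let coord := (b.baseChange L).repr u
  let v := ValuationRing.valuation V L
  have hne : coord.support.Nonempty :=
    Finsupp.support_nonempty_iff.2 ((b.baseChange L).repr.map_ne_zero_iff.2 hu)
  -- Dividing `u` by a coordinate of maximal valuation makes it integral with a coordinate `1`.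
  obtain ⟨i, hi, hmax⟩ := coord.support.exists_max_image (fun j => v (coord j)) hne
  have ha : coord i ≠ 0 := Finsupp.mem_support_iff.1 hi
  obtain ⟨u', hu'⟩ : (coord i)⁻¹ • u ∈ (rTensor B (Algebra.ofId V L)).range := by
    refine (mem_range_rTensor_iff b).2 fun j => ?_
    suffices v ((coord i)⁻¹ * coord j) ≤ 1 by
      obtain ⟨r, hr⟩ := (ValuationRing.mem_integer_iff V L _).1 this
      exact ⟨r, hr.trans (by simp [coord])⟩
    obtain hj | hj := eq_or_ne (coord j) 0
    · simp [hj]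
    · rw [map_mul, map_inv₀, inv_mul_le_one₀ (v.pos_iff.2 ha)]
      exact hmax j (Finsupp.mem_support_iff.2 hj)
  have hcoord_one : (b.baseChange V).repr u' i = 1 := by
    refine IsFractionRing.injective V L ?_
    calc algebraMap V L ((b.baseChange V).repr u' i)
        = (b.baseChange L).repr ((coord i)⁻¹ • u) i := by
          rw [← hu']
          exact (baseChange_repr_rTensor b (Algebra.ofId V L) u' i).symm
      _ = algebraMap V L 1 := by simpa [coord] using inv_mul_cancel₀ ha
  refine ⟨coord i, u', ha, ?_, fun h => ?_⟩
  · exact ((eq_inv_smul_iff₀ ha).1 hu').symm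
  · have := baseChange_repr_rTensor b (Algebra.ofId V (ResidueField V)) u' i
    simp [h, hcoord_one] at this

variable (V) in
theorem exists_eq_smul_rTensor_of_isUnit [NoZeroDivisors (ResidueField V ⊗[K] B)]
    {u : L ⊗[K] B} (hu : IsUnit u) :
    ∃ (a : L) (u' : V ⊗[K] B), IsUnit u' ∧ u = a • rTensor B (Algebra.ofId V L) u' := by
  obtain _ | _ := subsingleton_or_nontrivial (L ⊗[K] B)
  · exact ⟨1, 1, isUnit_one, Subsingleton.elim _ _⟩
  obtain ⟨t, hut⟩ := hu.exists_right_inv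
  obtain ⟨a, u', ha, rfl, hu'⟩ := exists_eq_smul_rTensor_and_residue_ne_zero V hu.ne_zero
  obtain ⟨c, t', hc, rfl, ht'⟩ :=
    exists_eq_smul_rTensor_and_residue_ne_zero V (right_ne_zero_of_mul (hut ▸ one_ne_zero))
  refine ⟨a, u', ?_, rfl⟩
  have hinj : Function.Injective (rTensor (R := K) B (Algebra.ofId V L)) :=
    rTensor_injective (IsFractionRing.injective V L)
  rw [smul_mul_smul_comm, ← map_mul] at hut
  obtain ⟨d, hd⟩ | ⟨d, hd⟩ := ValuationRing.isInteger_or_isInteger V (a * c)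
  · have : d • (u' * t') = 1 := hinj <| by
      rw [map_smul, map_one, ← algebraMap_smul L d, hd, hut]
    exact .of_mul_eq_one (d • t') (by rw [mul_smul_comm, this])
  · have hmul : u' * t' = algebraMap V _ d := hinj <| by
      rw [AlgHom.commutes, Algebra.algebraMap_eq_smul_one, ← hut, ← algebraMap_smul L d, hd,
        inv_smul_smul₀ (mul_ne_zero ha hc)]
    have hdu : IsUnit d := by
      by_contra hdu
      refine mul_ne_zero hu' ht' ?_
      rw [← map_mul, hmul, AlgHom.commutes, IsScalarTower.algebraMap_apply V (ResidueField V),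
        ResidueField.algebraMap_eq, (IsLocalRing.residue_eq_zero_iff d).2 hdu, map_zero]
    exact isUnit_of_mul_isUnit_left (hmul ▸ hdu.map _)

end Gauss

theorem mem_range_algebraMap_of_forall_valuationSubring {R L : Type*} [CommRing R] [Field L]
    [Algebra R L] [IsIntegrallyClosedIn R L] {x : L}
    (h : ∀ V : ValuationSubring L, (∀ r : R, algebraMap R L r ∈ V) → x ∈ V) :
    x ∈ (algebraMap R L).range := by
  by_contra hx
  have hx' : x ∉ (integralClosure R L).toSubring := fun hint =>
    hx (IsIntegrallyClosedIn.isIntegral_iff.1 hint)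
  have : IsIntegrallyClosedIn (integralClosure R L).toSubring L :=
    inferInstanceAs (IsIntegrallyClosedIn (integralClosure R L) L)
  obtain ⟨V, hV, hxV⟩ := Subring.exists_le_valuationSubring_of_isIntegrallyClosedIn hx'
  exact hxV (h V fun r => hV (algebraMap_mem (integralClosure R L) r))

theorem lTensor_smul_rTensor {K V L B C : Type*} [CommSemiring K] [CommSemiring V] [Algebra K V]
    [CommSemiring L] [Algebra K L] [Algebra V L] [IsScalarTower K V L] [Semiring B] [Algebra K B]
    [Semiring C] [Algebra K C] (f : B →ₐ[K] C) (a : L) (x : V ⊗[K] B) :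
    lTensor (S := L) L f (a • rTensor B (Algebra.ofId V L) x) =
      a • rTensor C (Algebra.ofId V L) (lTensor (S := V) V f x) := by
  induction x with
  | zero => simp
  | add x y hx hy => simp only [map_add, smul_add, hx, hy]
  | tmul => simp

section Cocycle

variable {K L : Type*} [Field K] [Field L] [Algebra K L] [IsIntegrallyClosedIn K L]

theorem exists_eq_one_tmul_of_forall_valuationSubring {C : Type*} [Ring C] [Algebra K C]
    {x : L ⊗[K] C}
    (h : ∀ (V : ValuationSubring L) [Algebra K V] [IsScalarTower K V L],
      x ∈ (rTensor C (Algebra.ofId V L)).range) :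
    ∃ c : C, x = 1 ⊗ₜ c := by
  let b := Module.Free.chooseBasis K C
  obtain ⟨y, rfl⟩ : x ∈ (rTensor C (Algebra.ofId K L)).range := by
    refine (mem_range_rTensor_iff b).2 fun i => ?_
    refine mem_range_algebraMap_of_forall_valuationSubring fun V hV => ?_
    let := ((algebraMap K L).codRestrict V.toSubring hV).toAlgebra
    have : IsScalarTower K V L := .of_algebraMap_eq fun _ => rfl
    obtain ⟨r, hr⟩ := (mem_range_rTensor_iff b).1 (h V) i
    exact hr ▸ r.2
  obtain ⟨c, rfl⟩ := (TensorProduct.lid K C).symm.surjective y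
  exact ⟨c, by simp⟩

theorem exists_lTensor_eq_one_tmul_mul_lTensor {B C : Type*} [CommRing B] [Algebra K B]
    [CommRing C] [Algebra K C]
    (hB : ∀ (V : ValuationSubring L) [Algebra K V] [IsScalarTower K V L],
      NoZeroDivisors (IsLocalRing.ResidueField V ⊗[K] B))
    {u : L ⊗[K] B} (hu : IsUnit u) (f g : B →ₐ[K] C) :
    ∃ c : C, lTensor (S := L) L f u = (1 ⊗ₜ c) * lTensor (S := L) L g u := by
  have hgu := hu.map (lTensor (S := L) L g)
  obtain ⟨w, hw⟩ := hgu.dvd (a := lTensor (S := L) L f u)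
  obtain ⟨c, rfl⟩ : ∃ c : C, w = 1 ⊗ₜ c := by
    refine exists_eq_one_tmul_of_forall_valuationSubring fun V _ _ => ?_
    have := hB V
    obtain ⟨a, u', hu', rfl⟩ := exists_eq_smul_rTensor_of_isUnit V hu
    obtain ⟨w', hw'⟩ := (hu'.map (lTensor (S := V) V g)).dvd (a := lTensor (S := V) V f u')
    refine ⟨w', hgu.mul_left_cancel ?_⟩
    calc lTensor (S := L) L g (a • rTensor B (Algebra.ofId V L) u') *
          rTensor C (Algebra.ofId V L) w'
        = a • rTensor C (Algebra.ofId V L) (lTensor (S := V) V g u' * w') := by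
          rw [lTensor_smul_rTensor, map_mul, smul_mul_assoc]
      _ = lTensor (S := L) L f (a • rTensor B (Algebra.ofId V L) u') := by
          rw [← hw', lTensor_smul_rTensor]
      _ = _ := hw
  exact ⟨c, hw.trans (mul_comm _ _)⟩

end Cocycle

section Slice

variable {K M N : Type*} [CommSemiring K] [AddCommMonoid M] [Module K M] [AddCommMonoid N]
  [Module K N]

/-- The slice map `m ⊗ n ↦ φ m • n`, contracting the left factor against a functional. -/
noncomputable def sliceLeft (φ : Module.Dual K M) : M ⊗[K] N →ₗ[K] N :=
  TensorProduct.lid K N ∘ₗ φ.rTensor N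

/-- The slice map `m ⊗ n ↦ ψ n • m`, contracting the right factor against a functional. -/
noncomputable def sliceRight (ψ : Module.Dual K N) : M ⊗[K] N →ₗ[K] M :=
  TensorProduct.rid K M ∘ₗ ψ.lTensor M

@[simp]
theorem sliceLeft_tmul (φ : Module.Dual K M) (m : M) (n : N) :
    sliceLeft φ (m ⊗ₜ[K] n) = φ m • n := by
  simp [sliceLeft]

@[simp]
theorem sliceRight_tmul (ψ : Module.Dual K N) (m : M) (n : N) :
    sliceRight ψ (m ⊗ₜ[K] n) = ψ n • m := by
  simp [sliceRight]

theorem exists_sliceLeft_ne_zero [Module.Free K M] {u : M ⊗[K] N} (hu : u ≠ 0) :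
    ∃ φ : Module.Dual K M, sliceLeft φ u ≠ 0 := by
  classical
  let b := Module.Free.chooseBasis K M
  obtain ⟨i, hi⟩ := Finsupp.ne_iff.1 <|
    (TensorProduct.equivFinsuppOfBasisLeft b).map_ne_zero_iff.2 hu
  exact ⟨b.coord i, by simpa [sliceLeft, TensorProduct.equivFinsuppOfBasisLeft_apply] using hi⟩

variable {A B C : Type*} [CommSemiring A] [Algebra K A] [Semiring B] [Algebra K B]
  [Semiring C] [Algebra K C]

theorem sliceLeft_lTensor (φ : Module.Dual K A) (f : B →ₐ[K] C) (u : A ⊗[K] B) :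
    sliceLeft φ (lTensor (S := A) A f u) = f (sliceLeft φ u) := by
  induction u with
  | zero => simp
  | add x y hx hy => simp only [map_add, hx, hy]
  | tmul => simp

theorem sliceLeft_one_tmul_mul (φ : Module.Dual K A) (b : B) (u : A ⊗[K] B) :
    sliceLeft φ ((1 ⊗ₜ b) * u) = b * sliceLeft φ u := by
  induction u with
  | zero => simp
  | add x y hx hy => simp only [map_add, mul_add, hx, hy]
  | tmul => simp

theorem lTensor_sliceRight_includeLeft_mul (ψ : Module.Dual K C) (c : C) (u : A ⊗[K] B) :
    (sliceRight ψ).lTensor A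
      (lTensor (S := A) A (includeLeft : B →ₐ[K] B ⊗[K] C) u * (1 ⊗ₜ (1 ⊗ₜ c))) = ψ c • u := by
  induction u with
  | zero => simp
  | add x y hx hy => simp only [map_add, add_mul, smul_add, hx, hy]
  | tmul => simp

theorem lTensor_sliceRight_includeRight_mul (ψ : Module.Dual K B) (c : C) (u : A ⊗[K] B) :
    (sliceRight ψ).lTensor A
      (lTensor (S := A) A (includeRight : B →ₐ[K] C ⊗[K] B) u * (1 ⊗ₜ (c ⊗ₜ 1))) =
        sliceRight ψ u ⊗ₜ c := by
  induction u with
  | zero => simp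
  | add x y hx hy => simp only [map_add, add_mul, TensorProduct.add_tmul, hx, hy]
  | tmul => simp [TensorProduct.smul_tmul]

end Slice

theorem exists_eq_tmul_of_lTensor_includeLeft_eq {K A B : Type*} [Field K] [CommRing A]
    [Algebra K A] [CommRing B] [Algebra K B] {u : A ⊗[K] B} {c : B ⊗[K] B}
    (h : lTensor (S := A) A (includeLeft : B →ₐ[K] B ⊗[K] B) u =
      (1 ⊗ₜ c) * lTensor (S := A) A (includeRight : B →ₐ[K] B ⊗[K] B) u) :
    ∃ a b, u = a ⊗ₜ b := by
  obtain rfl | hu := eq_or_ne u 0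
  · exact ⟨0, 0, by simp⟩
  obtain ⟨φ, hφ⟩ := exists_sliceLeft_ne_zero hu
  obtain ⟨ψ, hψ⟩ := Module.Projective.exists_dual_eq_one K hφ
  set b := sliceLeft φ u
  have hc : b ⊗ₜ 1 = c * (1 ⊗ₜ b) := by
    simpa only [sliceLeft_lTensor, sliceLeft_one_tmul_mul, includeLeft_apply, includeRight_apply]
      using congrArg (sliceLeft φ) h
  have hmul : lTensor (S := A) A (includeLeft : B →ₐ[K] B ⊗[K] B) u * (1 ⊗ₜ (1 ⊗ₜ b)) =
      lTensor (S := A) A (includeRight : B →ₐ[K] B ⊗[K] B) u * (1 ⊗ₜ (b ⊗ₜ 1)) := by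
    rw [h, hc, mul_right_comm, tmul_mul_tmul, one_mul, mul_comm]
  refine ⟨sliceRight ψ u, b, ?_⟩
  simpa only [lTensor_sliceRight_includeLeft_mul, lTensor_sliceRight_includeRight_mul, hψ,
    one_smul] using congrArg ((sliceRight ψ).lTensor A) hmul

universe v

theorem isUnit_tensor_iff_of_relAlgClosed_general {K : Type*} {L : Type v} {B : Type*}
    [Field K] [Field L] [Algebra K L] [IsIntegrallyClosedIn K L] [CommRing B] [Algebra K B]
    (hB : ∀ (F : Type v) [Field F] [Algebra K F], IsDomain (F ⊗[K] B))
    {u : L ⊗[K] B} (hu : IsUnit u) :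
    ∃ (a : L) (b : B), a ≠ 0 ∧ b ≠ 0 ∧ u = a ⊗ₜ b := by
  have := hB L
  obtain ⟨c, hc⟩ := exists_lTensor_eq_one_tmul_mul_lTensor
    (fun V _ _ => (hB (IsLocalRing.ResidueField V)).to_noZeroDivisors) hu
    (includeLeft : B →ₐ[K] B ⊗[K] B) includeRight
  obtain ⟨a, b, rfl⟩ := exists_eq_tmul_of_lTensor_includeLeft_eq hc
  refine ⟨a, b, ?_, ?_, rfl⟩
  · rintro rfl
    simp at hu
  · rintro rfl
    simp at hu

/-- If `K` is relatively algebraically closed in the field extension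
`L|K` (characteristic zero), then every unit of `L ⊗_K L` is of the form `a ⊗ b` with
`a, b ∈ L` nonzero. -/
theorem isUnit_tensor_iff_of_relAlgClosed
    (K L : Type*) [Field K] [CharZero K] [Field L] [CharZero L] [Algebra K L]
    (hrac : ∀ x : L, IsAlgebraic K x → x ∈ (algebraMap K L).range)
    (u : L ⊗[K] L) (hu : IsUnit u) :
    ∃ a b : L, a ≠ 0 ∧ b ≠ 0 ∧ u = a ⊗ₜ[K] b := by
  have : IsIntegrallyClosedIn K L :=
    isIntegrallyClosedIn_iff.2 ⟨(algebraMap K L).injective, fun hx => hrac _ hx.isAlgebraic⟩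
  exact isUnit_tensor_iff_of_relAlgClosed_general (fun _ _ _ => isDomain_tensorProduct) hu
end

section
/- Let L|K be an extension of fields of characteristic zero such that K is relatively algebraically closed in L, and let M be any field extension of K. Then M is integrally closed in L ⊗_K M: every element of L ⊗_K M that is integral over M lies in the image of M (i.e., K is absolutely algebraically closed in L). -/
open scoped TensorProduct

/-!
Over a perfect field `K`, every element of `S ⊗ B` integral over a reduced `K`-algebra `S` comes
from `S ⊗ C`, where `C` is the integral closure of `K` in `B`. For smooth `S` this is a theorem of
Mathlib. A domain of finite type over `K` has a smooth localization by generic smoothness, and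
whether an element lies in `S ⊗ C` can be tested after applying any jointly injective family of
maps out of `S`, because `B ⧸ C` is free over `K`. Hence the result for domains of finite type, for
all domains by passing to finitely generated subalgebras, and for reduced rings by testing on the
quotients by prime ideals.
-/

theorem eq_zero_of_forall_rTensor_eq_zero {R M N ι : Type*} {P : ι → Type*} [CommSemiring R]
    [AddCommMonoid M] [Module R M] [AddCommMonoid N] [Module R N] [Module.Free R N]
    [∀ i, AddCommMonoid (P i)] [∀ i, Module R (P i)] (f : ∀ i, M →ₗ[R] P i)
    (hf : ∀ m, (∀ i, f i m = 0) → m = 0) {x : M ⊗[R] N}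
    (hx : ∀ i, (f i).rTensor N x = 0) : x = 0 := by
  classical
  let b := Module.Free.chooseBasis R N
  have coeff_rTensor (i j) (y : M ⊗[R] N) :
      TensorProduct.equivFinsuppOfBasisRight b ((f i).rTensor N y) j =
        f i (TensorProduct.equivFinsuppOfBasisRight b y j) := by
    induction y <;> simp_all
  refine (TensorProduct.equivFinsuppOfBasisRight b).map_eq_zero_iff.mp (Finsupp.ext fun j ↦ ?_)
  exact hf _ fun i ↦ by rw [← coeff_rTensor, hx, map_zero, Finsupp.zero_apply]

theorem exists_fg_subalgebra_isIntegral {R S T : Type*} [CommRing R] [CommRing S] [Ring T]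
    [Algebra R S] [Algebra S T] {x : T} (hx : IsIntegral S x) :
    ∃ A : Subalgebra R S, A.FG ∧ IsIntegral A x := by
  obtain ⟨p, hp, hpx⟩ := hx
  have hlift : p ∈ Polynomial.lifts (algebraMap (Algebra.adjoin R (p.coeffs : Set S)) S) :=
    (Polynomial.lifts_iff_coeffs_subset_range _).mpr fun a ha ↦
      ⟨⟨a, Algebra.subset_adjoin ha⟩, rfl⟩
  obtain ⟨q, hqp, -, hq⟩ := Polynomial.lifts_and_natDegree_eq_and_monic hlift hp
  refine ⟨_, Subalgebra.fg_adjoin_finset _, q, hq, ?_⟩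
  rwa [← hqp, Polynomial.eval₂_map] at hpx

theorem baseChange_bot_eq_bot {R : Type*} (S B : Type*) [CommSemiring R] [CommSemiring S]
    [Algebra R S] [Semiring B] [Algebra R B] : (⊥ : Subalgebra R B).baseChange S = ⊥ := by
  rw [eq_bot_iff]
  rintro _ ⟨z, rfl⟩
  induction z with
  | zero => simp
  | add u v hu hv => simpa using add_mem hu hv
  | tmul s b =>
    obtain ⟨r, hr⟩ := Algebra.mem_bot.mp b.2
    refine Algebra.mem_bot.mpr ⟨r • s, ?_⟩
    calc (r • s) ⊗ₜ[R] (1 : B)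
      _ = s ⊗ₜ (r • 1) := TensorProduct.smul_tmul r s 1
      _ = s ⊗ₜ (b : B) := by rw [← Algebra.algebraMap_eq_smul_one, hr]

section BaseChange

variable {R S T B : Type*} [CommRing R] [CommRing S] [Algebra R S] [CommRing T] [Algebra R T]
  [Ring B] [Algebra R B]

theorem mem_baseChange_iff_lTensor_mkQ_eq_zero {C : Subalgebra R B} {x : S ⊗[R] B} :
    x ∈ C.baseChange S ↔ (Subalgebra.toSubmodule C).mkQ.lTensor S x = 0 := by
  rw [← LinearMap.mem_ker, lTensor_mkQ]
  rfl

theorem lTensor_mkQ_map_id (C : Subalgebra R B) (φ : S →ₐ[R] T) (x : S ⊗[R] B) :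
    (Subalgebra.toSubmodule C).mkQ.lTensor T (Algebra.TensorProduct.map φ (.id R B) x) =
      φ.toLinearMap.rTensor _ ((Subalgebra.toSubmodule C).mkQ.lTensor S x) := by
  change (LinearMap.lTensor _ _) (φ.toLinearMap.rTensor B x) = _
  rw [← LinearMap.comp_apply, ← LinearMap.comp_apply, LinearMap.lTensor_comp_rTensor,
    LinearMap.rTensor_comp_lTensor]

theorem map_id_mem_baseChange {C : Subalgebra R B} (φ : S →ₐ[R] T) {x : S ⊗[R] B}
    (hx : x ∈ C.baseChange S) :
    Algebra.TensorProduct.map φ (.id R B) x ∈ C.baseChange T := by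
  rw [mem_baseChange_iff_lTensor_mkQ_eq_zero] at hx ⊢
  rw [lTensor_mkQ_map_id, hx, map_zero]

theorem mem_baseChange_of_forall_map_id_mem {ι : Type*} {T : ι → Type*} [∀ i, CommRing (T i)]
    [∀ i, Algebra R (T i)] {C : Subalgebra R B} [Module.Free R (B ⧸ Subalgebra.toSubmodule C)]
    (φ : ∀ i, S →ₐ[R] T i) (hφ : ∀ s, (∀ i, φ i s = 0) → s = 0) {x : S ⊗[R] B}
    (hx : ∀ i, Algebra.TensorProduct.map (φ i) (.id R B) x ∈ C.baseChange (T i)) :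
    x ∈ C.baseChange S := by
  simp only [mem_baseChange_iff_lTensor_mkQ_eq_zero, lTensor_mkQ_map_id] at hx ⊢
  exact eq_zero_of_forall_rTensor_eq_zero (fun i ↦ (φ i).toLinearMap) hφ hx

theorem isIntegral_map_id (φ : S →ₐ[R] T) {x : S ⊗[R] B} (hx : IsIntegral S x) :
    IsIntegral T (Algebra.TensorProduct.map φ (.id R B) x) :=
  hx.map_of_comp_eq φ.toRingHom (Algebra.TensorProduct.map φ (.id R B)).toRingHom <| by
    ext s
    simp [Algebra.TensorProduct.algebraMap_apply]

theorem exists_fg_subalgebra_isIntegral_map_id_eq [Module.Flat R B] {x : S ⊗[R] B}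
    (hx : IsIntegral S x) :
    ∃ A : Subalgebra R S, A.FG ∧
      ∃ y : A ⊗[R] B, IsIntegral A y ∧ Algebra.TensorProduct.map A.val (.id R B) y = x := by
  obtain ⟨A₀, hA₀, hxA₀⟩ := exists_fg_subalgebra_isIntegral (R := R) hx
  obtain ⟨A₁, hA₁, y, hy⟩ := TensorProduct.Algebra.exists_of_fg x
  let A := A₀ ⊔ A₁
  let z := (Subalgebra.inclusion (le_sup_right : A₁ ≤ A)).toLinearMap.rTensor B y
  have hz : Algebra.TensorProduct.map (Algebra.ofId A S) (.id R B) z = x :=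
    hy ▸ (LinearMap.rTensor_comp_apply B A.val.toLinearMap _ y).symm
  have hxA : IsIntegral A x :=
    hxA₀.map_of_comp_eq (Subalgebra.inclusion (le_sup_left : A₀ ≤ A)).toRingHom (.id _) rfl
  have hinj : Function.Injective (Algebra.TensorProduct.map (Algebra.ofId A S) (.id R B)) :=
    Module.Flat.rTensor_preserves_injective_linearMap A.val.toLinearMap Subtype.val_injective
  exact ⟨A, hA₀.sup hA₁, z, (isIntegral_algHom_iff _ hinj).mp (hz ▸ hxA), hz⟩

end BaseChange

section IntegralClosure

variable {R S B : Type*} [CommRing R] [CommRing S] [Algebra R S] [CommRing B] [Algebra R B]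

theorem integralClosure_le_baseChange_of_jointly_injective {ι : Type*} {T : ι → Type*}
    [∀ i, CommRing (T i)] [∀ i, Algebra R (T i)]
    [Module.Free R (B ⧸ Subalgebra.toSubmodule (integralClosure R B))]
    (φ : ∀ i, S →ₐ[R] T i) (hφ : ∀ s, (∀ i, φ i s = 0) → s = 0)
    (hT : ∀ i, integralClosure (T i) (T i ⊗[R] B) ≤ (integralClosure R B).baseChange (T i)) :
    integralClosure S (S ⊗[R] B) ≤ (integralClosure R B).baseChange S := fun _ hx ↦
  mem_baseChange_of_forall_map_id_mem φ hφ fun i ↦ hT i (isIntegral_map_id (φ i) hx)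

theorem integralClosure_le_baseChange_of_forall_fg [Module.Flat R B]
    (h : ∀ A : Subalgebra R S, A.FG →
      integralClosure A (A ⊗[R] B) ≤ (integralClosure R B).baseChange A) :
    integralClosure S (S ⊗[R] B) ≤ (integralClosure R B).baseChange S := fun x hx ↦ by
  obtain ⟨A, hA, y, hy, rfl⟩ := exists_fg_subalgebra_isIntegral_map_id_eq hx
  exact map_id_mem_baseChange A.val (h A hA hy)

theorem integralClosure_le_baseChange_of_smooth [Algebra.Smooth R S] :
    integralClosure S (S ⊗[R] B) ≤ (integralClosure R B).baseChange S := fun x hx ↦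
  let ⟨z, hz⟩ := TensorProduct.toIntegralClosure_bijective_of_smooth.surjective ⟨x, hx⟩
  ⟨z, congrArg Subtype.val hz⟩

end IntegralClosure

section PerfectField

variable {K S B : Type*} [Field K] [PerfectField K] [CommRing S] [Algebra K S] [CommRing B]
  [Algebra K B]

variable (K S) in
theorem isSmoothAt_bot_of_perfectField [IsDomain S] [Algebra.EssFiniteType K S] :
    Algebra.IsSmoothAt K (⊥ : Ideal S) := by
  have : IsFractionRing S (Localization.AtPrime (⊥ : Ideal S)) := by
    simpa only [Ideal.primeCompl_bot] using
      Localization.isLocalization (M := (⊥ : Ideal S).primeCompl)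
  let : Field (Localization.AtPrime (⊥ : Ideal S)) := IsFractionRing.toField S
  exact Algebra.FormallySmooth.of_perfectField

variable (K S) in
theorem exists_ne_zero_smooth_localizationAway [IsDomain S] [Algebra.FiniteType K S] :
    ∃ f : S, f ≠ 0 ∧ Algebra.Smooth K (Localization.Away f) := by
  have : Algebra.FinitePresentation K S := Algebra.FinitePresentation.of_finiteType.mp inferInstance
  have := isSmoothAt_bot_of_perfectField K S
  exact Algebra.IsSmoothAt.exists_notMem_smooth K (⊥ : Ideal S)

theorem integralClosure_le_baseChange_of_finiteType [IsDomain S] [Algebra.FiniteType K S] :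
    integralClosure S (S ⊗[K] B) ≤ (integralClosure K B).baseChange S := by
  obtain ⟨f, hf, _⟩ := exists_ne_zero_smooth_localizationAway K S
  have hinj : Function.Injective (algebraMap S (Localization.Away f)) :=
    IsLocalization.injective _ (powers_le_nonZeroDivisors_of_noZeroDivisors hf)
  exact integralClosure_le_baseChange_of_jointly_injective
    (fun _ : Unit ↦ IsScalarTower.toAlgHom K S (Localization.Away f))
    (fun s hs ↦ (map_eq_zero_iff _ hinj).mp (hs ()))
    fun _ ↦ integralClosure_le_baseChange_of_smooth

theorem integralClosure_le_baseChange_of_isDomain [IsDomain S] :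
    integralClosure S (S ⊗[K] B) ≤ (integralClosure K B).baseChange S :=
  integralClosure_le_baseChange_of_forall_fg fun A hA ↦
    have : Algebra.FiniteType K A := A.fg_iff_finiteType.mp hA
    integralClosure_le_baseChange_of_finiteType

theorem integralClosure_le_baseChange_of_isReduced [IsReduced S] :
    integralClosure S (S ⊗[K] B) ≤ (integralClosure K B).baseChange S := by
  refine integralClosure_le_baseChange_of_jointly_injective
    (fun p : PrimeSpectrum S ↦ Ideal.Quotient.mkₐ K p.asIdeal) (fun s hs ↦ ?_)
    fun p ↦ integralClosure_le_baseChange_of_isDomain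
  have hs_mem (p : Ideal S) (hp : p.IsPrime) : s ∈ p :=
    Ideal.Quotient.eq_zero_iff_mem.mp (hs ⟨p, hp⟩)
  exact (nilpotent_iff_mem_prime.mpr hs_mem).eq_zero

end PerfectField

theorem integrallyClosed_in_tensor_of_relAlgClosed_general
    (K L M : Type*) [Field K] [PerfectField K] [CommRing L] [CommRing M] [IsReduced M]
    [Algebra K L] [Algebra K M]
    (hrac : ∀ x : L, IsAlgebraic K x → x ∈ (algebraMap K L).range) :
    letI : Algebra M (L ⊗[K] M) := Algebra.TensorProduct.rightAlgebra
    ∀ x : L ⊗[K] M, IsIntegral M x → x ∈ (algebraMap M (L ⊗[K] M)).range := by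
  let : Algebra M (L ⊗[K] M) := Algebra.TensorProduct.rightAlgebra
  intro x hx
  have hbot : integralClosure K L = ⊥ :=
    eq_bot_iff.mpr fun y hy ↦ hrac y (IsIntegral.isAlgebraic hy)
  let e := Algebra.TensorProduct.commRight K M L
  have hmem : e.symm x ∈ (⊥ : Subalgebra M (M ⊗[K] L)) := by
    rw [← baseChange_bot_eq_bot, ← hbot]
    exact integralClosure_le_baseChange_of_isReduced (hx.map e.symm)
  obtain ⟨m, hm⟩ := Algebra.mem_bot.mp hmem
  exact ⟨m, e.symm.injective (by rw [← hm, e.symm.commutes])⟩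

/-- If `K` is relatively algebraically closed in the field extension
`L|K` (characteristic zero) and `M` is any field extension of `K`, then `M` is integrally
closed in `L ⊗_K M` (regarded as an `M`-algebra via the second factor): every element of
`L ⊗_K M` integral over `M` lies in the image of `M`. -/
theorem integrallyClosed_in_tensor_of_relAlgClosed
    (K L M : Type*) [Field K] [CharZero K] [Field L] [CharZero L] [Field M] [CharZero M]
    [Algebra K L] [Algebra K M]
    (hrac : ∀ x : L, IsAlgebraic K x → x ∈ (algebraMap K L).range) :
    letI : Algebra M (L ⊗[K] M) := Algebra.TensorProduct.rightAlgebra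
    ∀ x : L ⊗[K] M, IsIntegral M x → x ∈ (algebraMap M (L ⊗[K] M)).range := by
  exact integrallyClosed_in_tensor_of_relAlgClosed_general K L M hrac
end
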